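/- For every integer n ≥ 116, log p(n+2) - 3·log p(n+1) + 3·log p(n) - log p(n-1) > 0; equivalently, Δ³ log p(n-1) > 0, so the sequence {p(n)}_{n≥116} is ratio log-convex. -/

import Mathlib

open Real

/-- The partition function, as a real number. -/
noncomputable def p (n : ℕ) : ℝ := (Fintype.card (Nat.Partition n) : ℝ)

/-!
Cauchy's formula expresses `p n` as an integral over a circle `|q| = exp (-2πy)`. With
`q = exp (-2πz)`, the modular transformation of the eta function replaces the generating function
by `√z exp (π/12 (1/z - z))` times its value at `1/z`, which is `1` up to a small tail. The
integrand with the tail dropped has an explicit primitive: completing the square in the variables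
`a √z ∓ b / √z` reduces it to incomplete Gaussian integrals. Taking the circle through the saddle
point gives `p n` up to an error `5 exp (5μ/8)`, where `μ = (π/6) √(24n - 1)` and the main term is
of order `exp μ / μ²`.

The third difference of the logarithm of the main term is bounded below by its third derivative,
which is of order `μ⁻⁵`, while the error is exponentially small; this settles all large `n`. For
the remaining `n` the numbers `p 0, …, p 1600` are read off as digits of one integer: the inverse
of `∏ (1 - q ^ k)` at `q = 2 ^ 160` modulo `q ^ 1601`.
-/

theorem p_pos (n : ℕ) : 0 < p n := by
  unfold p
  exact_mod_cast Fintype.card_pos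

theorem p_zero : p 0 = 1 := by simp [p]

theorem p_succ_le_two_pow (n : ℕ) : p (n + 1) ≤ 2 ^ n := by
  have h := Fintype.card_le_of_surjective _ (Nat.Partition.ofComposition_surj (n := n + 1))
  rw [composition_card, Nat.add_sub_cancel] at h
  unfold p
  exact_mod_cast h

section GeneratingFunction

open PowerSeries Finset

/-- The number of partitions of `n` into parts of size at most `N`. -/
def boundedPartitionCount (N n : ℕ) : ℕ := #(Nat.Partition.restricted n (· ≤ N))

theorem boundedPartitionCount_le (N n : ℕ) :
    boundedPartitionCount N n ≤ Fintype.card (Nat.Partition n) :=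
  card_le_univ _

theorem boundedPartitionCount_eq_of_le {N n : ℕ} (h : n ≤ N) :
    boundedPartitionCount N n = Fintype.card (Nat.Partition n) := by
  rw [boundedPartitionCount, Nat.Partition.restricted, filter_true_of_mem, card_univ]
  exact fun x _ i hi ↦ (Nat.Partition.le_of_mem_parts hi).trans h

theorem mk_boundedPartitionCount_mul_prod (R : Type*) [CommRing R] (N : ℕ) :
    (PowerSeries.mk fun n ↦ (boundedPartitionCount N n : R)) *
      ∏ i ∈ range N, (1 - X ^ (i + 1)) = 1 := by
  open PowerSeries.WithPiTopology in
  let _ : TopologicalSpace R := ⊥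
  have _ : DiscreteTopology R := ⟨rfl⟩
  have hF := (Nat.Partition.hasProd_powerSeriesMk_card_restricted R (· ≤ N)).unique
    (hasProd_prod_of_ne_finset_one (s := range N) fun i hi ↦ if_neg (by simpa using hi))
  simp only [boundedPartitionCount]
  rw [hF, ← prod_mul_distrib]
  refine prod_eq_one fun i hi ↦ ?_
  simp only [if_pos (Nat.succ_le_of_lt (mem_range.mp hi)), pow_mul]
  exact tsum_pow_mul_one_sub_of_constantCoeff_eq_zero (by simp)

theorem mk_dvd_mul_one_sub_X_pow (R : Type*) [CommRing R] {k : ℕ} (hk : k ≠ 0) :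
    (PowerSeries.mk fun n ↦ if k ∣ n then (1 : R) else 0) * (1 - X ^ k) = 1 := by
  ext n
  rw [mul_sub, mul_one, map_sub, coeff_mul_X_pow', coeff_one]
  rcases lt_or_ge n k with h | h
  · simp [h.not_ge, Nat.dvd_iff_mod_eq_zero, Nat.mod_eq_of_lt h]
  · simp [h, (Nat.dvd_sub_iff_left h dvd_rfl), show n ≠ 0 by lia]

theorem mk_boundedPartitionCount_eq_prod (R : Type*) [CommRing R] (N : ℕ) :
    (PowerSeries.mk fun n ↦ (boundedPartitionCount N n : R)) =
      ∏ i ∈ range N, PowerSeries.mk fun n ↦ if i + 1 ∣ n then (1 : R) else 0 := by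
  have h : (∏ i ∈ range N, PowerSeries.mk fun n ↦ if i + 1 ∣ n then (1 : R) else 0) *
      ∏ i ∈ range N, (1 - X ^ (i + 1)) = 1 := by
    rw [← prod_mul_distrib]
    exact prod_eq_one fun i _ ↦ mk_dvd_mul_one_sub_X_pow R i.succ_ne_zero
  exact (IsUnit.of_mul_eq_one_right _ h).mul_left_injective
    ((mk_boundedPartitionCount_mul_prod R N).trans h.symm)

theorem hasSum_coeff_mul {f g : ℂ⟦X⟧} {q s t : ℂ}
    (hf : HasSum (fun n ↦ coeff n f * q ^ n) s) (hg : HasSum (fun n ↦ coeff n g * q ^ n) t) :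
    HasSum (fun n ↦ coeff n (f * g) * q ^ n) (s * t) := by
  have hcauchy : HasSum (fun n ↦ ∑ ij ∈ antidiagonal n,
      coeff ij.1 f * q ^ ij.1 * (coeff ij.2 g * q ^ ij.2)) (s * t) := by
    rw [← hf.tsum_eq, ← hg.tsum_eq, tsum_mul_tsum_eq_tsum_sum_antidiagonal_of_summable_norm
      hf.summable.norm hg.summable.norm]
    exact (summable_norm_sum_mul_antidiagonal_of_summable_norm
      hf.summable.norm hg.summable.norm).of_norm.hasSum
  convert hcauchy using 2 with n
  rw [coeff_mul, sum_mul]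
  refine sum_congr rfl fun ij hij ↦ ?_
  rw [← mem_antidiagonal.mp hij, pow_add]
  ring

theorem hasSum_coeff_prod {ι : Type*} {s : Finset ι} {f : ι → ℂ⟦X⟧} {q : ℂ} {t : ι → ℂ}
    (h : ∀ i ∈ s, HasSum (fun n ↦ coeff n (f i) * q ^ n) (t i)) :
    HasSum (fun n ↦ coeff n (∏ i ∈ s, f i) * q ^ n) (∏ i ∈ s, t i) := by
  classical
  induction s using Finset.induction_on with
  | empty =>
    rw [prod_empty, prod_empty]
    convert hasSum_ite_eq 0 (1 : ℂ) using 2 with n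
    cases n <;> simp [coeff_one]
  | insert a s ha ih =>
    rw [prod_insert ha, prod_insert ha]
    exact hasSum_coeff_mul (h a (mem_insert_self a s))
      (ih fun i hi ↦ h i (mem_insert_of_mem hi))

variable {q : ℂ}

theorem hasSum_dvd_mul_pow (hq : ‖q‖ < 1) {k : ℕ} (hk : k ≠ 0) :
    HasSum (fun n ↦ (if k ∣ n then (1 : ℂ) else 0) * q ^ n) (1 - q ^ k)⁻¹ := by
  have hgeom := hasSum_geometric_of_norm_lt_one (ξ := q ^ k)
    (by rw [norm_pow]; exact pow_lt_one₀ (norm_nonneg q) hq hk)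
  refine ((mul_right_injective₀ hk).hasSum_iff fun n hn ↦ ?_).mp ?_
  · rw [if_neg fun ⟨j, hj⟩ ↦ hn ⟨j, hj.symm⟩, zero_mul]
  · simpa [Function.comp_def, pow_mul] using hgeom

theorem hasSum_boundedPartitionCount_mul_pow (hq : ‖q‖ < 1) (N : ℕ) :
    HasSum (fun n ↦ (boundedPartitionCount N n : ℂ) * q ^ n)
      (∏ i ∈ range N, (1 - q ^ (i + 1))⁻¹) := by
  have h := hasSum_coeff_prod (s := range N) (f := fun i ↦ PowerSeries.mk fun n ↦
    if i + 1 ∣ n then (1 : ℂ) else 0) fun i _ ↦ by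
      simpa only [coeff_mk] using hasSum_dvd_mul_pow hq i.succ_ne_zero
  simpa only [← mk_boundedPartitionCount_eq_prod, coeff_mk] using h

theorem tprod_one_sub_pow_ne_zero (hq : ‖q‖ < 1) : ∏' n : ℕ, (1 - q ^ (n + 1)) ≠ 0 := by
  simp only [sub_eq_add_neg]
  refine tprod_one_add_ne_zero_of_summable (fun n h ↦ ?_) ?_
  · have h₁ : q ^ (n + 1) = 1 := by linear_combination -h
    exact (pow_lt_one₀ (norm_nonneg q) hq n.succ_ne_zero).ne (by rw [← norm_pow, h₁, norm_one])
  · simpa [pow_succ] using (summable_geometric_of_lt_one (norm_nonneg q) hq).mul_right ‖q‖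

theorem tendsto_prod_inv_one_sub_pow (hq : ‖q‖ < 1) :
    Filter.Tendsto (fun N ↦ ∏ i ∈ range N, (1 - q ^ (i + 1))⁻¹) Filter.atTop
      (nhds (∏' n : ℕ, (1 - q ^ (n + 1)))⁻¹) := by
  simp only [prod_inv_distrib]
  exact (ModularForm.multipliable_one_sub_pow hq).hasProd.tendsto_prod_nat.inv₀
    (tprod_one_sub_pow_ne_zero hq)

theorem summable_p_mul_pow {r : ℝ} (hr₀ : 0 ≤ r) (hr : r < 1) :
    Summable fun n ↦ p n * r ^ n := by
  have hr' : ‖(r : ℂ)‖ < 1 := by rwa [Complex.norm_of_nonneg hr₀]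
  obtain ⟨C, hC⟩ := (Metric.isBounded_range_of_tendsto _
    (tendsto_prod_inv_one_sub_pow hr')).exists_norm_le
  refine summable_of_sum_range_le (c := C)
    (fun n ↦ mul_nonneg (p_pos n).le (pow_nonneg hr₀ n)) fun N ↦ ?_
  have hsum : HasSum (fun n ↦ (boundedPartitionCount N n : ℝ) * r ^ n)
      (∏ i ∈ range N, (1 - (r : ℂ) ^ (i + 1))⁻¹).re := by
    convert Complex.hasSum_re (hasSum_boundedPartitionCount_mul_pow hr' N) using 2 with n
    norm_cast
  calc ∑ n ∈ range N, p n * r ^ n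
      = ∑ n ∈ range N, (boundedPartitionCount N n : ℝ) * r ^ n :=
        sum_congr rfl fun n hn ↦ by
          rw [p, boundedPartitionCount_eq_of_le (mem_range.mp hn).le]
    _ ≤ (∏ i ∈ range N, (1 - (r : ℂ) ^ (i + 1))⁻¹).re :=
        sum_le_hasSum _ (fun n _ ↦ by positivity) hsum
    _ ≤ C := (Complex.re_le_norm _).trans (hC _ ⟨N, rfl⟩)

theorem hasSum_p_mul_pow (hq : ‖q‖ < 1) :
    HasSum (fun n ↦ (p n : ℂ) * q ^ n) (∏' n : ℕ, (1 - q ^ (n + 1)))⁻¹ := by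
  have hbound : Summable fun n ↦ p n * ‖q‖ ^ n := summable_p_mul_pow (norm_nonneg q) hq
  have hlim : Filter.Tendsto (fun N ↦ ∑' n, (boundedPartitionCount N n : ℂ) * q ^ n)
      Filter.atTop (nhds (∑' n, (p n : ℂ) * q ^ n)) := by
    refine tendsto_tsum_of_dominated_convergence hbound (fun n ↦ ?_) (.of_forall fun N n ↦ ?_)
    · refine tendsto_const_nhds.congr' ?_
      filter_upwards [Filter.eventually_ge_atTop n] with N hN
      simp [p, boundedPartitionCount_eq_of_le hN]
    · rw [norm_mul, norm_pow, Complex.norm_natCast]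
      gcongr
      exact Nat.cast_le.mpr (boundedPartitionCount_le N n)
  simp only [(hasSum_boundedPartitionCount_mul_pow hq _).tsum_eq] at hlim
  rw [tendsto_nhds_unique (tendsto_prod_inv_one_sub_pow hq) hlim]
  refine (Summable.of_norm ?_).hasSum
  simpa [abs_of_pos (p_pos _)] using hbound

end GeneratingFunction

section PartitionGen

/-- The generating function `∑ p(n) qⁿ` of the partition numbers at `q = exp (-2πz)`, written as
Euler's product; `0 < z.re` corresponds to `‖q‖ < 1`. -/
noncomputable def partitionGen (z : ℂ) : ℂ :=
  (∏' k : ℕ, (1 - Complex.exp (-2 * π * z) ^ (k + 1)))⁻¹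

variable {z : ℂ} {t : ℝ}

theorem norm_exp_neg_two_pi_mul_lt_one (hz : 0 < z.re) : ‖Complex.exp (-2 * π * z)‖ < 1 := by
  rw [Complex.norm_exp, Real.exp_lt_one_iff]
  simpa using mul_pos two_pi_pos hz

theorem partitionGen_ne_zero (hz : 0 < z.re) : partitionGen z ≠ 0 :=
  inv_ne_zero (tprod_one_sub_pow_ne_zero (norm_exp_neg_two_pi_mul_lt_one hz))

theorem hasSum_partitionGen (hz : 0 < z.re) :
    HasSum (fun n ↦ (p n : ℂ) * Complex.exp (-2 * π * n * z)) (partitionGen z) := by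
  rw [partitionGen]
  convert hasSum_p_mul_pow (norm_exp_neg_two_pi_mul_lt_one hz) using 3 with n
  rw [← Complex.exp_nat_mul]
  ring_nf

theorem eta_I_mul (z : ℂ) : ModularForm.eta (Complex.I * z) =
    Complex.exp (-(π / 12 * z)) * (partitionGen z)⁻¹ := by
  have hq : 2 * π * Complex.I * (Complex.I * z) = -2 * π * z := by
    linear_combination (2 * π * z) * Complex.I_sq
  rw [ModularForm.eta, partitionGen, inv_inv]
  simp only [ModularForm.eta_q_eq_pow, Function.Periodic.qParam]
  push_cast
  rw [hq]
  ring_nf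

theorem ne_zero_of_re_pos (hz : 0 < z.re) : z ≠ 0 := by
  rintro rfl
  simp at hz

theorem csqrt_I_mul (hz : 0 < z.re) :
    Complex.sqrt (Complex.I * z) = Complex.sqrt Complex.I * Complex.sqrt z := by
  have hz₀ := ne_zero_of_re_pos hz
  have harg := abs_lt.mp (Complex.abs_arg_lt_pi_div_two_iff.mpr (Or.inl hz))
  have hlog : Complex.log (Complex.I * z) = Complex.log Complex.I + Complex.log z :=
    Complex.log_mul Complex.I_ne_zero hz₀ (by
      rw [Complex.arg_I]; constructor <;> linarith [pi_pos])
  rw [sqrt_eq_exp (mul_ne_zero Complex.I_ne_zero hz₀), sqrt_eq_exp Complex.I_ne_zero,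
    sqrt_eq_exp hz₀, hlog, add_div, Complex.exp_add]

theorem partitionGen_eq_csqrt_mul (hz : 0 < z.re) : partitionGen z =
    Complex.sqrt z * Complex.exp (π / 12 * (1 / z - z)) * partitionGen (1 / z) := by
  have hz₀ := ne_zero_of_re_pos hz
  have hz' : 0 < (1 / z).re := by
    rw [one_div, Complex.inv_re]
    exact div_pos hz (Complex.normSq_pos.mpr hz₀)
  have hI : Complex.sqrt Complex.I ≠ 0 := by simp [Complex.sqrt]
  have heta := ModularForm.eta_comp_eq_csqrt_I_inv (x := Complex.I * z) (by simpa using hz)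
  simp only [Function.comp_apply, Pi.smul_apply, Pi.mul_apply, smul_eq_mul] at heta
  rw [show -1 / (Complex.I * z) = Complex.I * (1 / z) by field_simp; simp, eta_I_mul, eta_I_mul,
    csqrt_I_mul hz, ← mul_assoc, ← mul_assoc, inv_mul_cancel_left₀ hI] at heta
  have := partitionGen_ne_zero hz
  have := partitionGen_ne_zero hz'
  have hexp : Complex.exp (-(π / 12 * z)) =
      Complex.exp (π / 12 * (1 / z - z)) * Complex.exp (-(π / 12 * (1 / z))) := by
    rw [← Complex.exp_add]; ring_nf
  rw [hexp] at heta
  have := Complex.exp_ne_zero (-(π / 12 * (1 / z)))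
  field_simp at heta ⊢
  exact heta

end PartitionGen

section PartitionTail

/-- The sum `∑ p(n) exp (-2πnt)` over `n ≥ 1`. -/
noncomputable def partitionTail (t : ℝ) : ℝ :=
  ∑' n : ℕ, p (n + 1) * exp (-2 * π * (n + 1) * t)

variable {z : ℂ} {t : ℝ}

theorem partitionTail_nonneg (t : ℝ) : 0 ≤ partitionTail t :=
  tsum_nonneg fun _ ↦ mul_nonneg (p_pos _).le (exp_pos _).le

theorem hasSum_partitionGen_sub_one (hz : 0 < z.re) :
    HasSum (fun n : ℕ ↦ (p (n + 1) : ℂ) * Complex.exp (-2 * π * (n + 1) * z))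
      (partitionGen z - 1) := by
  have h := hasSum_partitionGen hz
  rw [← hasSum_nat_add_iff' 1] at h
  simpa [p_zero] using h

theorem norm_p_mul_exp (n : ℕ) (z : ℂ) :
    ‖(p (n + 1) : ℂ) * Complex.exp (-2 * π * (n + 1) * z)‖ =
      p (n + 1) * exp (-2 * π * (n + 1) * z.re) := by
  rw [norm_mul, Complex.norm_of_nonneg (p_pos _).le, Complex.norm_exp]
  congr 2
  rw [← Complex.re_ofReal_mul]
  push_cast
  rfl

theorem summable_partitionTail (ht : 0 < t) :
    Summable fun n : ℕ ↦ p (n + 1) * exp (-2 * π * (n + 1) * t) := by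
  simpa only [norm_p_mul_exp, Complex.ofReal_re] using
    (hasSum_partitionGen_sub_one (z := t) (by simpa)).summable.norm

theorem norm_partitionGen_sub_one_le (hz : 0 < z.re) :
    ‖partitionGen z - 1‖ ≤ partitionTail z.re := by
  refine (hasSum_partitionGen_sub_one hz).norm_le_of_bounded
    (summable_partitionTail hz).hasSum fun n ↦ (norm_p_mul_exp n z).le

theorem partitionGen_ofReal (ht : 0 < t) : partitionGen t = (1 + partitionTail t : ℝ) := by
  have h := Complex.hasSum_ofReal.mpr (summable_partitionTail ht).hasSum
  push_cast at h
  rw [Complex.ofReal_add, Complex.ofReal_one, ← sub_eq_iff_eq_add',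
    (hasSum_partitionGen_sub_one (z := t) (by simpa)).unique h, partitionTail, Complex.ofReal_tsum]
  push_cast
  rfl

theorem partitionTail_antitoneOn : AntitoneOn partitionTail (Set.Ioi 0) := by
  intro s hs t ht hst
  refine Summable.tsum_le_tsum (fun n ↦ ?_) (summable_partitionTail ht) (summable_partitionTail hs)
  have := pi_pos
  have := (p_pos (n + 1)).le
  simp only [neg_mul]
  gcongr

theorem exp_neg_two_pi_le : exp (-2 * π) ≤ 1 / 3 := by
  rw [neg_mul, exp_neg, ← one_div]
  gcongr
  linarith [add_one_le_exp (2 * π), pi_gt_three]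

theorem partitionTail_one_le : partitionTail 1 ≤ 1 := by
  have hgeom := (hasSum_geometric_of_lt_one (r := 2 / 3) (by norm_num) (by norm_num)).mul_left
    (1 / 3 : ℝ)
  norm_num at hgeom
  refine hasSum_le (fun n ↦ ?_) (summable_partitionTail one_pos).hasSum hgeom
  calc p (n + 1) * exp (-2 * π * (n + 1) * 1) = p (n + 1) * exp (-2 * π) ^ (n + 1) := by
        rw [← exp_nat_mul]; push_cast; ring_nf
    _ ≤ 2 ^ n * (1 / 3) ^ (n + 1) := by
        gcongr
        · exact p_succ_le_two_pow n
        · exact exp_neg_two_pi_le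
    _ = 1 / 3 * (2 / 3) ^ n := by rw [pow_succ, div_pow, div_pow]; ring

theorem partitionTail_le_one (ht : 1 ≤ t) : partitionTail t ≤ 1 :=
  (partitionTail_antitoneOn
    (Set.mem_Ioi.mpr one_pos) (one_pos.trans_le ht) ht).trans partitionTail_one_le

theorem exp_mul_partitionTail_le (ht : 1 ≤ t) :
    exp (π / 12 * t) * partitionTail t ≤ exp (π / 12) := by
  refine le_trans ?_ (mul_le_of_le_one_right (exp_pos _).le partitionTail_one_le)
  rw [partitionTail, partitionTail, ← tsum_mul_left, ← tsum_mul_left]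
  refine Summable.tsum_le_tsum (fun n ↦ ?_) ((summable_partitionTail (by linarith)).mul_left _)
    ((summable_partitionTail one_pos).mul_left _)
  rw [mul_left_comm, mul_left_comm (exp (π / 12)), ← exp_add, ← exp_add]
  have hπ : 0 ≤ π * (t - 1) := mul_nonneg pi_pos.le (by linarith)
  refine mul_le_mul_of_nonneg_left (exp_le_exp.mpr ?_) (p_pos (n + 1)).le
  nlinarith [mul_nonneg hπ n.cast_nonneg]

theorem one_add_partitionTail_eq (ht : 0 < t) :
    1 + partitionTail t =
      √t * exp (π / 12 * (1 / t - t)) * (1 + partitionTail (1 / t)) := by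
  have hsqrt : Complex.sqrt t = (√t : ℝ) := by
    simp [Complex.sqrt_eq_real_add_ite, abs_of_pos ht]
  have h := partitionGen_eq_csqrt_mul (z := t) (by simpa)
  rw [hsqrt, ← Complex.ofReal_one, ← Complex.ofReal_div, partitionGen_ofReal ht,
    partitionGen_ofReal (one_div_pos.mpr ht)] at h
  exact_mod_cast h

theorem one_add_partitionTail_le (ht₀ : 0 < t) (ht : t ≤ 1) :
    1 + partitionTail t ≤ 2 * exp (π / 12 * (1 / t - t)) := by
  have hsqrt : √t ≤ 1 := sqrt_le_one.mpr ht
  have htail : partitionTail (1 / t) ≤ 1 := partitionTail_le_one (by rwa [le_div_iff₀ ht₀, one_mul])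
  rw [one_add_partitionTail_eq ht₀]
  calc √t * exp (π / 12 * (1 / t - t)) * (1 + partitionTail (1 / t))
      ≤ 1 * exp (π / 12 * (1 / t - t)) * (1 + 1) := by
        gcongr
        linarith [partitionTail_nonneg (1 / t)]
    _ = 2 * exp (π / 12 * (1 / t - t)) := by ring

theorem exp_mul_partitionTail_le_two_mul {s : ℝ} (ht : 0 < t) (hs : 1 ≤ s) (hts : 1 / t ≤ s) :
    exp (π / 12 * t) * partitionTail t ≤ 2 * exp (π / 12 * s) := by
  have := pi_pos
  rcases le_total 1 t with ht₁ | ht₁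
  · calc exp (π / 12 * t) * partitionTail t ≤ exp (π / 12 * 1) := by
          simpa using exp_mul_partitionTail_le ht₁
      _ ≤ exp (π / 12 * s) := by gcongr
      _ ≤ 2 * exp (π / 12 * s) := by linarith [exp_pos (π / 12 * s)]
  · calc exp (π / 12 * t) * partitionTail t
        ≤ exp (π / 12 * t) * (2 * exp (π / 12 * (1 / t - t))) := by
          gcongr
          linarith [one_add_partitionTail_le ht ht₁]
      _ = 2 * exp (π / 12 * (1 / t)) := by
          rw [mul_left_comm, ← exp_add]; ring_nf
      _ ≤ 2 * exp (π / 12 * s) := by gcongr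

theorem p_le_exp_mul_one_add_partitionTail (ht : 0 < t) (n : ℕ) :
    p n ≤ exp (2 * π * n * t) * (1 + partitionTail t) := by
  have hterm : p n * exp (-(2 * π * n * t)) ≤ 1 + partitionTail t := by
    cases n with
    | zero => simpa [p_zero] using partitionTail_nonneg t
    | succ n =>
      have := (summable_partitionTail ht).le_tsum n fun m _ ↦
        mul_nonneg (p_pos (m + 1)).le (exp_pos _).le
      rw [← neg_mul, ← neg_mul, ← neg_mul]
      push_cast
      exact this.trans (by rw [partitionTail]; linarith)
  rwa [exp_neg, ← div_eq_mul_inv, div_le_iff₀' (exp_pos _)] at hterm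

end PartitionTail

section Coefficients

theorem integral_exp_two_pi_int_mul_I (k : ℤ) :
    ∫ x in (-(1 / 2) : ℝ)..1 / 2, Complex.exp (2 * π * k * Complex.I * x) =
      if k = 0 then 1 else 0 := by
  split_ifs with hk
  · norm_num [hk]
  · have hc : 2 * π * k * Complex.I ≠ 0 := by simp [hk, pi_ne_zero]
    have hperiod : Complex.exp (2 * π * k * Complex.I * (1 / 2 : ℝ)) =
        Complex.exp (2 * π * k * Complex.I * (-(1 / 2) : ℝ)) := by
      rw [Complex.exp_eq_exp_iff_exists_int]
      exact ⟨k, by push_cast; ring⟩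
    rw [integral_exp_mul_complex hc, hperiod, sub_self, zero_div]

theorem coeff_eq_integral_of_hasSum {a : ℕ → ℂ} {f : ℂ → ℂ} {y : ℝ}
    (hf : ∀ x : ℝ, HasSum (fun n ↦ a n * Complex.exp (-2 * π * n * (y + x * Complex.I)))
      (f (y + x * Complex.I))) (n : ℕ) :
    a n = ∫ x in (-(1 / 2) : ℝ)..1 / 2,
      f (y + x * Complex.I) * Complex.exp (2 * π * n * (y + x * Complex.I)) := by
  set F : ℕ → ℝ → ℂ := fun m x ↦ a m * Complex.exp (-2 * π * m * (y + x * Complex.I)) *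
    Complex.exp (2 * π * n * (y + x * Complex.I)) with hF
  have hnorm (m : ℕ) (x : ℝ) : ‖F m x‖ = ‖F m 0‖ := by
    simp only [hF, norm_mul, Complex.norm_exp]
    simp
  have hsum := intervalIntegral.hasSum_integral_of_dominated_convergence
    (μ := MeasureTheory.volume) (a := -(1 / 2)) (b := 1 / 2) (F := F) (fun m _ ↦ ‖F m 0‖)
    (fun m ↦ (by fun_prop : Continuous (F m)).aestronglyMeasurable)
    (fun m ↦ .of_forall fun x _ ↦ (hnorm m x).le)
    (.of_forall fun _ _ ↦ ((hf 0).mul_right _).summable.norm)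
    intervalIntegrable_const (.of_forall fun x _ ↦ (hf x).mul_right _)
  have hintegral (m : ℕ) : ∫ x in (-(1 / 2) : ℝ)..1 / 2, F m x = if m = n then a n else 0 := by
    have hFm (x : ℝ) : F m x = a m * Complex.exp (2 * π * (n - m) * y) *
        Complex.exp (2 * π * ((n - m : ℤ) : ℂ) * Complex.I * x) := by
      simp only [hF]
      rw [mul_assoc (a m), mul_assoc (a m), ← Complex.exp_add, ← Complex.exp_add]
      push_cast
      ring_nf
    simp only [hFm, intervalIntegral.integral_const_mul, integral_exp_two_pi_int_mul_I, sub_eq_zero,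
      Nat.cast_inj]
    rcases eq_or_ne m n with rfl | hmn
    · simp
    · simp [hmn, hmn.symm]
  simp only [hintegral] at hsum
  exact (hasSum_ite_eq n (a n)).unique hsum

theorem p_eq_integral {y : ℝ} (hy : 0 < y) (n : ℕ) :
    (p n : ℂ) = ∫ x in (-(1 / 2) : ℝ)..1 / 2,
      partitionGen (y + x * Complex.I) * Complex.exp (2 * π * n * (y + x * Complex.I)) :=
  coeff_eq_integral_of_hasSum (a := fun n ↦ (p n : ℂ))
    (fun x ↦ hasSum_partitionGen (by simpa)) n

end Coefficients

section MainIntegrand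

/-- The integrand that remains of Cauchy's integral for `p n` after the eta transformation when the
transformed generating function is replaced by its constant term `1`; here
`A = 2π(n - 1/24)` and `B = π/12`. -/
noncomputable def mainIntegrand (A B : ℝ) (z : ℂ) : ℂ :=
  Complex.sqrt z * Complex.exp (A * z + B / z)

theorem csqrt_sq (z : ℂ) : Complex.sqrt z ^ 2 = z := by
  simp [Complex.sqrt]

theorem norm_csqrt (z : ℂ) : ‖Complex.sqrt z‖ = √‖z‖ := by
  rw [eq_comm, sqrt_eq_iff_mul_self_eq (norm_nonneg _) (norm_nonneg _), ← sq, ← norm_pow, csqrt_sq]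

theorem hasDerivAt_csqrt {z : ℂ} (hz : 0 < z.re) :
    HasDerivAt Complex.sqrt (1 / (2 * Complex.sqrt z)) z := by
  refine (Complex.hasDerivAt_sqrt (Or.inl hz)).congr_deriv ?_
  rw [Complex.sqrt, neg_div, Complex.cpow_neg, one_div (2 : ℂ)]
  field_simp

theorem continuous_mainIntegrand_line (A B : ℝ) {y : ℝ} (hy : 0 < y) :
    Continuous fun x : ℝ ↦ mainIntegrand A B (y + x * Complex.I) := by
  refine continuous_iff_continuousAt.mpr fun x ↦ ?_
  have hre : 0 < (y + x * Complex.I : ℂ).re := by simpa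
  have hz₀ := ne_zero_of_re_pos hre
  have hm : ContinuousAt (mainIntegrand A B) (y + x * Complex.I) :=
    (hasDerivAt_csqrt hre).continuousAt.mul (by fun_prop (disch := exact hz₀))
  exact ContinuousAt.comp (f := fun x : ℝ ↦ (y + x * Complex.I : ℂ)) hm (by fun_prop)

theorem partitionGen_mul_exp_sub_mainIntegrand (n : ℕ) {z : ℂ} (hz : 0 < z.re) :
    partitionGen z * Complex.exp (2 * π * n * z) - mainIntegrand (2 * π * (n - 1 / 24)) (π / 12) z =
      mainIntegrand (2 * π * (n - 1 / 24)) (π / 12) z * (partitionGen (1 / z) - 1) := by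
  have hexp : Complex.exp ((2 * π * (n - 1 / 24) : ℝ) * z + (π / 12 : ℝ) / z) =
      Complex.exp (π / 12 * (1 / z - z)) * Complex.exp (2 * π * n * z) := by
    rw [← Complex.exp_add]
    push_cast
    ring_nf
  rw [partitionGen_eq_csqrt_mul hz, mainIntegrand, hexp]
  ring

theorem norm_mainIntegrand {A B : ℝ} {z : ℂ} :
    ‖mainIntegrand A B z‖ = √‖z‖ * exp (A * z.re + B * (1 / z).re) := by
  rw [mainIntegrand, norm_mul, norm_csqrt, Complex.norm_exp, Complex.add_re, Complex.re_ofReal_mul,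
    ← mul_one_div, Complex.re_ofReal_mul]

theorem norm_partitionGen_mul_exp_sub_mainIntegrand_le (n : ℕ) {x y : ℝ} (hy : 0 < y)
    (hy' : y ≤ 1 / 4) (hx : |x| ≤ 1 / 2) :
    ‖partitionGen (y + x * Complex.I) * Complex.exp (2 * π * n * (y + x * Complex.I)) -
        mainIntegrand (2 * π * (n - 1 / 24)) (π / 12) (y + x * Complex.I)‖ ≤
      2 * exp (2 * π * (n - 1 / 24) * y + π / 12 * (1 / (4 * y) + y)) := by
  have hx₂ : x ^ 2 ≤ 1 / 4 := by nlinarith [abs_le.mp hx]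
  set z : ℂ := y + x * Complex.I with hz
  have hre : z.re = y := by simp [hz]
  have hnsq : Complex.normSq z = y ^ 2 + x ^ 2 := Complex.normSq_add_mul_I y x
  have hinv : (1 / z).re = y / (y ^ 2 + x ^ 2) := by rw [one_div, Complex.inv_re, hre, hnsq]
  have hinv_pos : 0 < (1 / z).re := by rw [hinv]; positivity
  have hsqrt : √‖z‖ ≤ 1 := by
    rw [sqrt_le_one, ← sq_le_one_iff₀ (norm_nonneg z), ← Complex.normSq_eq_norm_sq, hnsq]
    nlinarith
  have htail := exp_mul_partitionTail_le_two_mul (s := 1 / (4 * y) + y) hinv_pos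
    (by
      have : 1 ≤ 1 / (4 * y) := by rw [le_div_iff₀ (by positivity)]; linarith
      linarith)
    (by
      rw [hinv, one_div_div, div_add' _ _ _ (by positivity), div_le_div_iff₀ hy (by positivity)]
      nlinarith)
  rw [partitionGen_mul_exp_sub_mainIntegrand n (by rwa [hre]), norm_mul, norm_mainIntegrand, hre,
    exp_add, exp_add]
  calc _ ≤ 1 * (exp (2 * π * (n - 1 / 24) * y) * exp (π / 12 * (1 / z).re)) *
        partitionTail (1 / z).re := by
        gcongr
        exact norm_partitionGen_sub_one_le hinv_pos
    _ = exp (2 * π * (n - 1 / 24) * y) *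
        (exp (π / 12 * (1 / z).re) * partitionTail (1 / z).re) := by ring
    _ ≤ exp (2 * π * (n - 1 / 24) * y) * (2 * exp (π / 12 * (1 / (4 * y) + y))) := by gcongr
    _ = _ := by ring

theorem norm_p_sub_integral_mainIntegrand_le (n : ℕ) {y : ℝ} (hy : 0 < y) (hy' : y ≤ 1 / 4) :
    ‖(p n : ℂ) - ∫ x in (-(1 / 2) : ℝ)..1 / 2,
      mainIntegrand (2 * π * (n - 1 / 24)) (π / 12) (y + x * Complex.I)‖ ≤
      2 * exp (2 * π * (n - 1 / 24) * y + π / 12 * (1 / (4 * y) + y)) := by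
  have hcauchy := p_eq_integral hy n
  have hintegral := intervalIntegral.intervalIntegrable_of_integral_ne_zero
    (hcauchy ▸ Complex.ofReal_ne_zero.mpr (p_pos n).ne')
  rw [hcauchy, ← intervalIntegral.integral_sub hintegral
    ((continuous_mainIntegrand_line _ _ hy).intervalIntegrable _ _)]
  refine (intervalIntegral.norm_integral_le_of_norm_le_const fun x hx ↦
    norm_partitionGen_mul_exp_sub_mainIntegrand_le n hy hy' ?_).trans_eq (by norm_num)
  rw [Set.uIoc_of_le (by norm_num)] at hx
  exact abs_le.mpr ⟨hx.1.le, hx.2⟩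

end MainIntegrand

section GaussTail

open MeasureTheory Set ComplexConjugate

/-- The integral of `exp (s²)` over the vertical half-line from `v` to `v + i∞`: the primitive of
`-exp (s²)` that decays in the upper half-plane. -/
noncomputable def gaussTail (v : ℂ) : ℂ :=
  ∫ t in Ioi (0 : ℝ), Complex.I * Complex.exp ((v + Complex.I * t) ^ 2)

theorem norm_exp_add_I_mul_sq (v : ℂ) (t : ℝ) :
    ‖Complex.exp ((v + Complex.I * t) ^ 2)‖ =
      ‖Complex.exp (v ^ 2)‖ * rexp (-2 * v.im * t) * rexp (-t ^ 2) := by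
  rw [Complex.norm_exp, Complex.norm_exp, ← Real.exp_add, ← Real.exp_add]
  congr 1
  simp only [pow_two, Complex.mul_re, Complex.add_re, Complex.add_im, Complex.mul_im, Complex.I_re,
    Complex.I_im, Complex.ofReal_re, Complex.ofReal_im]
  ring

theorem exists_norm_exp_add_I_mul_sq_le (c : ℝ) :
    ∃ K : ℝ, ∀ v : ℂ, ‖v‖ ≤ c → ∀ t : ℝ, 0 ≤ t →
      ‖Complex.exp ((v + Complex.I * t) ^ 2)‖ * (1 + 2 * ‖v + Complex.I * t‖) ≤
        K * rexp (-(1 / 2) * t ^ 2) := by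
  refine ⟨rexp (c ^ 2 + 2 * c + 2 * (c + 1) ^ 2), fun v hv t ht ↦ ?_⟩
  have hlinear : 1 + 2 * ‖v + Complex.I * t‖ ≤ rexp (2 * (c + t)) := by
    have hnorm : ‖v + Complex.I * t‖ ≤ c + t := by
      refine (norm_add_le _ _).trans ?_
      simp [abs_of_nonneg ht, hv]
    linarith [Real.add_one_le_exp (2 * (c + t))]
  have hexp : ‖Complex.exp (v ^ 2)‖ ≤ rexp (c ^ 2) := by
    refine (Complex.norm_exp_le_exp_norm _).trans ?_
    rw [norm_pow]
    gcongr
  have hcross : rexp (-2 * v.im * t) ≤ rexp (2 * c * t) := by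
    rw [Real.exp_le_exp]
    nlinarith [(abs_le.mp ((Complex.abs_im_le_norm v).trans hv)).1]
  rw [norm_exp_add_I_mul_sq]
  calc ‖Complex.exp (v ^ 2)‖ * rexp (-2 * v.im * t) * rexp (-t ^ 2) * (1 + 2 * ‖v + Complex.I * t‖)
      ≤ rexp (c ^ 2) * rexp (2 * c * t) * rexp (-t ^ 2) * rexp (2 * (c + t)) := by gcongr
    _ = rexp (c ^ 2 + 2 * c * t + -t ^ 2 + 2 * (c + t)) := by simp only [Real.exp_add]
    _ ≤ rexp (c ^ 2 + 2 * c + 2 * (c + 1) ^ 2 + -(1 / 2) * t ^ 2) := by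
      rw [Real.exp_le_exp]
      nlinarith [sq_nonneg (t - 2 * (c + 1))]
    _ = rexp (c ^ 2 + 2 * c + 2 * (c + 1) ^ 2) * rexp (-(1 / 2) * t ^ 2) := Real.exp_add _ _

theorem exists_gaussian_dominates_near (v : ℂ) :
    ∃ K : ℝ, ∀ w ∈ Metric.ball v 1, ∀ t : ℝ, 0 ≤ t →
      ‖Complex.exp ((w + Complex.I * t) ^ 2)‖ ≤ K * rexp (-(1 / 2) * t ^ 2) ∧
      ‖Complex.exp ((w + Complex.I * t) ^ 2) * (2 * (w + Complex.I * t))‖ ≤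
        K * rexp (-(1 / 2) * t ^ 2) := by
  obtain ⟨K, hK⟩ := exists_norm_exp_add_I_mul_sq_le (‖v‖ + 1)
  refine ⟨K, fun w hw t ht ↦ ?_⟩
  have hw' : ‖w‖ ≤ ‖v‖ + 1 := by
    rw [mem_ball_iff_norm] at hw
    linarith [norm_sub_norm_le w v]
  have h := hK w hw' t ht
  rw [mul_one_add] at h
  constructor
  · exact le_of_add_le_of_nonneg_left h (by positivity)
  · rw [norm_mul, norm_mul, Complex.norm_two]
    exact le_of_add_le_of_nonneg_right h (norm_nonneg _)

theorem integrableOn_Ioi_of_norm_le_gaussian {f : ℝ → ℂ} (hf : Continuous f) {K : ℝ}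
    (hK : ∀ t, 0 ≤ t → ‖f t‖ ≤ K * rexp (-(1 / 2) * t ^ 2)) : IntegrableOn f (Ioi 0) := by
  refine Integrable.mono'
    ((integrable_exp_neg_mul_sq (b := 1 / 2) (by norm_num)).const_mul K).integrableOn
    hf.aestronglyMeasurable ?_
  filter_upwards [ae_restrict_mem measurableSet_Ioi] with t ht using hK t (le_of_lt ht)

theorem tendsto_exp_add_I_mul_sq (v : ℂ) :
    Filter.Tendsto (fun t : ℝ ↦ Complex.exp ((v + Complex.I * t) ^ 2)) Filter.atTop (nhds 0) := by
  obtain ⟨K, hK⟩ := exists_gaussian_dominates_near v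
  refine squeeze_zero_norm' (a := fun t : ℝ ↦ K * rexp (-(1 / 2) * t ^ 2)) ?_ ?_
  · filter_upwards [Filter.eventually_ge_atTop 0] with t ht
    exact (hK v (Metric.mem_ball_self one_pos) t ht).1
  · rw [← mul_zero K]
    refine (Real.tendsto_exp_atBot.comp ?_).const_mul K
    exact (Filter.tendsto_pow_atTop two_ne_zero).const_mul_atTop_of_neg (by norm_num)

theorem integral_deriv_exp_add_I_mul_sq (v : ℂ) :
    ∫ t in Ioi (0 : ℝ),
      Complex.I * (Complex.exp ((v + Complex.I * t) ^ 2) * (2 * (v + Complex.I * t))) =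
      -Complex.exp (v ^ 2) := by
  obtain ⟨K, hK⟩ := exists_gaussian_dominates_near v
  have hderiv (t : ℝ) : HasDerivAt (fun t : ℝ ↦ Complex.exp ((v + Complex.I * t) ^ 2))
      (Complex.I * (Complex.exp ((v + Complex.I * t) ^ 2) * (2 * (v + Complex.I * t)))) t := by
    have h := ((((hasDerivAt_id (t : ℂ)).const_mul Complex.I).const_add v).pow 2).cexp
    exact h.comp_ofReal.congr_deriv (by simp only [Pi.pow_apply, id]; push_cast; ring)
  have hintegral := integrableOn_Ioi_of_norm_le_gaussian (K := K) (f := fun t : ℝ ↦ Complex.I *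
      (Complex.exp ((v + Complex.I * t) ^ 2) * (2 * (v + Complex.I * t)))) (by fun_prop)
    fun t ht ↦ by
      rw [norm_mul, Complex.norm_I, one_mul]
      exact (hK v (Metric.mem_ball_self one_pos) t ht).2
  rw [integral_Ioi_of_hasDerivAt_of_tendsto' (fun t _ ↦ hderiv t) hintegral
    (tendsto_exp_add_I_mul_sq v)]
  simp

theorem hasDerivAt_gaussTail (v : ℂ) : HasDerivAt gaussTail (-Complex.exp (v ^ 2)) v := by
  obtain ⟨K, hK⟩ := exists_gaussian_dominates_near v
  have hcont (w : ℂ) : Continuous fun t : ℝ ↦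
      Complex.I * Complex.exp ((w + Complex.I * t) ^ 2) := by fun_prop
  have hderiv (w : ℂ) (t : ℝ) :
      HasDerivAt (fun w ↦ Complex.I * Complex.exp ((w + Complex.I * t) ^ 2))
        (Complex.I * (Complex.exp ((w + Complex.I * t) ^ 2) * (2 * (w + Complex.I * t)))) w := by
    have h := ((((hasDerivAt_id w).add_const (Complex.I * t)).pow 2).cexp).const_mul Complex.I
    exact h.congr_deriv (by simp)
  have hcont' : Continuous fun t : ℝ ↦
    Complex.I * (Complex.exp ((v + Complex.I * t) ^ 2) * (2 * (v + Complex.I * t))) := by fun_prop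
  have hbound : ∀ᵐ t : ℝ ∂volume.restrict (Ioi 0), ∀ w ∈ Metric.ball v 1,
      ‖Complex.I * (Complex.exp ((w + Complex.I * t) ^ 2) * (2 * (w + Complex.I * t)))‖ ≤
        K * rexp (-(1 / 2) * t ^ 2) := by
    filter_upwards [ae_restrict_mem measurableSet_Ioi] with t ht w hw
    rw [norm_mul, Complex.norm_I, one_mul]
    exact (hK w hw t (le_of_lt ht)).2
  have hintegral : IntegrableOn (fun t : ℝ ↦ Complex.I * Complex.exp ((v + Complex.I * t) ^ 2))
      (Ioi 0) := integrableOn_Ioi_of_norm_le_gaussian (hcont v) fun t ht ↦ by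
    rw [norm_mul, Complex.norm_I, one_mul]
    exact (hK v (Metric.mem_ball_self one_pos) t ht).1
  rw [← integral_deriv_exp_add_I_mul_sq]
  exact (hasDerivAt_integral_of_dominated_loc_of_deriv_le (Metric.ball_mem_nhds v one_pos)
    (.of_forall fun w ↦ (hcont w).aestronglyMeasurable) hintegral hcont'.aestronglyMeasurable hbound
    ((integrable_exp_neg_mul_sq (by norm_num)).const_mul K).integrableOn
    (.of_forall fun t w _ ↦ hderiv w t)).2

theorem gaussTail_zero : gaussTail 0 = Complex.I * (√π / 2 : ℝ) := by
  have h := integral_gaussian_Ioi 1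
  rw [gaussTail, integral_const_mul, ← div_one π, ← h, ← integral_complex_ofReal]
  congr 2
  ext t
  rw [zero_add, mul_pow]
  simp

theorem gaussTail_add_gaussTail_neg (v : ℂ) : gaussTail v + gaussTail (-v) = Complex.I * √π := by
  have hderiv (w : ℂ) : HasDerivAt (fun w ↦ gaussTail w + gaussTail (-w)) 0 w := by
    have h := (hasDerivAt_gaussTail w).add ((hasDerivAt_gaussTail (-w)).scomp w (hasDerivAt_neg w))
    exact h.congr_deriv (by simp)
  have hconst := is_const_of_deriv_eq_zero (fun w ↦ (hderiv w).differentiableAt)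
    (fun w ↦ (hderiv w).deriv) v 0
  simp only [neg_zero, gaussTail_zero] at hconst
  rw [hconst]
  push_cast
  ring

theorem gaussTail_conj (v : ℂ) :
    gaussTail (conj v) = Complex.I * √π + conj (gaussTail v) := by
  have hreflect : conj (gaussTail (-v)) = -gaussTail (conj v) := by
    rw [gaussTail, gaussTail, ← integral_conj, ← integral_neg]
    congr 1 with t
    simp only [map_mul, ← Complex.exp_conj, map_pow, map_add, map_neg, Complex.conj_I,
      Complex.conj_ofReal]
    ring_nf
  have h := congrArg conj (gaussTail_add_gaussTail_neg v)
  rw [map_add, hreflect, map_mul, Complex.conj_I, Complex.conj_ofReal] at h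
  linear_combination -h

theorem norm_gaussTail_le {v : ℂ} (hv : 0 ≤ v.im) :
    ‖gaussTail v‖ ≤ √π / 2 * ‖Complex.exp (v ^ 2)‖ := by
  have h := integral_gaussian_Ioi 1
  rw [div_one] at h
  rw [gaussTail, mul_comm, ← h, ← integral_const_mul]
  refine norm_integral_le_of_norm_le
    ((integrable_exp_neg_mul_sq one_pos).const_mul _).integrableOn ?_
  filter_upwards [ae_restrict_mem measurableSet_Ioi] with t ht
  rw [norm_mul, Complex.norm_I, one_mul, norm_exp_add_I_mul_sq, neg_one_mul, mul_assoc]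
  refine mul_le_mul_of_nonneg_left (mul_le_of_le_one_left (Real.exp_pos _).le ?_) (norm_nonneg _)
  rw [Real.exp_le_one_iff]
  nlinarith [mem_Ioi.mp ht]

end GaussTail

section MainPrimitive

open ComplexConjugate

theorem csqrt_ne_zero {z : ℂ} (hz : z ≠ 0) : Complex.sqrt z ≠ 0 := by
  simpa [Complex.sqrt]

theorem csqrt_im_nonneg {z : ℂ} (hz : 0 ≤ z.im) : 0 ≤ (Complex.sqrt z).im := by
  rw [Complex.sqrt_eq_real_add_ite, if_pos hz, one_mul, Complex.add_im, Complex.ofReal_im,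
    Complex.im_ofReal_mul, Complex.I_im]
  positivity

theorem csqrt_conj {z : ℂ} (hz : 0 < z.re) : Complex.sqrt (conj z) = conj (Complex.sqrt z) := by
  have harg : z.arg ≠ π := fun h ↦ hz.not_gt (Complex.arg_eq_pi_iff.mp h).1
  rw [Complex.sqrt, Complex.sqrt, Complex.conj_cpow _ _ harg, map_inv₀, Complex.conj_ofNat]

/-- The contribution `(b / a² - 1 / (2 a³)) exp (2 a b)` of the saddle point `b / a` of
`a² z + b² / z` to the integral of `mainIntegrand (a ^ 2) (b ^ 2)`; replacing `b` by `-b` gives the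
contribution of the other saddle point. -/
noncomputable def saddleTerm (a b : ℝ) : ℝ :=
  (b / a ^ 2 - 1 / (2 * a ^ 3)) * rexp (2 * a * b)

/-- The variable `a √z - b / √z`, in which the exponent `a² z + b² / z` of the main integrand
becomes a perfect square up to the constant `2 a b`. -/
noncomputable def saddleVariable (a b : ℝ) (z : ℂ) : ℂ :=
  a * Complex.sqrt z - b / Complex.sqrt z

/-- The primitive of `mainIntegrand (a ^ 2) (b ^ 2)` on the right half-plane, in closed form in
terms of the incomplete Gaussian integral `gaussTail`. -/
noncomputable def mainPrimitive (a b : ℝ) (z : ℂ) : ℂ :=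
  mainIntegrand (a ^ 2) (b ^ 2) z / a ^ 2 -
    saddleTerm a b * gaussTail (saddleVariable a b z) -
    saddleTerm a (-b) * gaussTail (saddleVariable a (-b) z)

theorem saddleVariable_conj (a b : ℝ) {z : ℂ} (hz : 0 < z.re) :
    saddleVariable a b (conj z) = conj (saddleVariable a b z) := by
  simp [saddleVariable, csqrt_conj hz]

theorem saddleVariable_im (a b : ℝ) (z : ℂ) :
    (saddleVariable a b z).im = (Complex.sqrt z).im * (a + b / ‖z‖) := by
  rw [← csqrt_sq z, norm_pow, csqrt_sq, ← Complex.normSq_eq_norm_sq, saddleVariable,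
    Complex.sub_im, div_eq_mul_inv (b : ℂ), Complex.im_ofReal_mul, Complex.im_ofReal_mul,
    Complex.inv_im]
  ring

theorem exp_mul_exp_saddleVariable_sq (a b : ℝ) {z : ℂ} (hz : z ≠ 0) :
    (rexp (2 * a * b) : ℂ) * Complex.exp (saddleVariable a b z ^ 2) =
      Complex.exp ((a ^ 2 : ℝ) * z + (b ^ 2 : ℝ) / z) := by
  rw [Complex.ofReal_exp, ← Complex.exp_add, saddleVariable]
  congr 1
  have := csqrt_ne_zero hz
  nth_rw 3 4 [← csqrt_sq z]
  push_cast
  field_simp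
  ring

theorem saddleTerm_mul_exp_saddleVariable_sq (a b : ℝ) {z : ℂ} (hz : z ≠ 0) :
    saddleTerm a b * Complex.exp (saddleVariable a b z ^ 2) =
      (b / a ^ 2 - 1 / (2 * a ^ 3) : ℝ) * Complex.exp ((a ^ 2 : ℝ) * z + (b ^ 2 : ℝ) / z) := by
  rw [saddleTerm, Complex.ofReal_mul, mul_assoc, exp_mul_exp_saddleVariable_sq a b hz]

theorem hasDerivAt_saddleVariable (a b : ℝ) {z : ℂ} (hz : 0 < z.re) :
    HasDerivAt (saddleVariable a b) ((a + b / z) / (2 * Complex.sqrt z)) z := by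
  have hroot := csqrt_ne_zero (ne_zero_of_re_pos hz)
  have hsqrt := hasDerivAt_csqrt hz
  refine ((hsqrt.const_mul (a : ℂ)).sub
    ((hasDerivAt_const z (b : ℂ)).div hsqrt hroot)).congr_deriv ?_
  rw [csqrt_sq]
  field_simp
  ring

theorem hasDerivAt_saddleTerm_mul_gaussTail (a b : ℝ) {z : ℂ} (hz : 0 < z.re) :
    HasDerivAt (fun z ↦ saddleTerm a b * gaussTail (saddleVariable a b z))
      (-((b / a ^ 2 - 1 / (2 * a ^ 3) : ℝ) * Complex.exp ((a ^ 2 : ℝ) * z + (b ^ 2 : ℝ) / z)) *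
        ((a + b / z) / (2 * Complex.sqrt z))) z := by
  rw [← saddleTerm_mul_exp_saddleVariable_sq a b (ne_zero_of_re_pos hz)]
  exact (((hasDerivAt_gaussTail _).comp z (hasDerivAt_saddleVariable a b hz)).const_mul
    (saddleTerm a b : ℂ)).congr_deriv (by ring)

theorem hasDerivAt_mainIntegrand (A B : ℝ) {z : ℂ} (hz : 0 < z.re) :
    HasDerivAt (mainIntegrand A B) (Complex.exp (A * z + B / z) *
      (1 / (2 * Complex.sqrt z) + Complex.sqrt z * (A - B / z ^ 2))) z := by
  have hz₀ := ne_zero_of_re_pos hz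
  have hexponent : HasDerivAt (fun z : ℂ ↦ A * z + B / z)
      (A * 1 + (0 * z - B * 1) / z ^ 2) z :=
    ((hasDerivAt_id z).const_mul _).add ((hasDerivAt_const z _).div (hasDerivAt_id z) hz₀)
  exact ((hasDerivAt_csqrt hz).mul hexponent.cexp).congr_deriv (by ring)

theorem hasDerivAt_mainPrimitive {a : ℝ} (b : ℝ) (ha : a ≠ 0) {z : ℂ} (hz : 0 < z.re) :
    HasDerivAt (mainPrimitive a b) (mainIntegrand (a ^ 2) (b ^ 2) z) z := by
  have hroot := csqrt_ne_zero (ne_zero_of_re_pos hz)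
  have ha' : (a : ℂ) ≠ 0 := by exact_mod_cast ha
  refine ((((hasDerivAt_mainIntegrand (a ^ 2) (b ^ 2) hz).div_const ((a : ℂ) ^ 2)).sub
    (hasDerivAt_saddleTerm_mul_gaussTail a b hz)).sub
    (hasDerivAt_saddleTerm_mul_gaussTail a (-b) hz)).congr_deriv ?_
  rw [mainIntegrand, neg_sq]
  generalize Complex.exp ((a ^ 2 : ℝ) * z + (b ^ 2 : ℝ) / z) = E
  have hsq := csqrt_sq z
  generalize Complex.sqrt z = r at hroot hsq ⊢
  subst hsq
  push_cast
  field_simp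
  ring

theorem mainIntegrand_conj (A B : ℝ) {z : ℂ} (hz : 0 < z.re) :
    mainIntegrand A B (conj z) = conj (mainIntegrand A B z) := by
  simp [mainIntegrand, csqrt_conj hz, ← Complex.exp_conj]

theorem mainPrimitive_sub_mainPrimitive_conj (a b : ℝ) {z : ℂ} (hz : 0 < z.re) :
    mainPrimitive a b z - mainPrimitive a b (conj z) = mainPrimitive a b z -
      conj (mainPrimitive a b z) +
      Complex.I * (√π * (saddleTerm a b + saddleTerm a (-b)) : ℝ) := by
  simp only [mainPrimitive, mainIntegrand_conj _ _ hz, saddleVariable_conj _ _ hz, gaussTail_conj,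
    map_sub, map_mul, map_div₀, map_pow, Complex.conj_ofReal]
  push_cast
  ring

theorem norm_saddleTerm_mul_gaussTail_le {a b : ℝ} (ha : 0 < a) {z : ℂ} (hz : z ≠ 0)
    (him : 0 ≤ z.im) (hab : |b| ≤ a * ‖z‖) :
    ‖saddleTerm a b * gaussTail (saddleVariable a b z)‖ ≤
      √π / 2 * ((|b| / a ^ 2 + 1 / (2 * a ^ 3)) *
        rexp ((a ^ 2 : ℝ) * z + (b ^ 2 : ℝ) / z).re) := by
  have hfactor : 0 ≤ a + b / ‖z‖ := by
    rw [← sub_neg_eq_add, ← neg_div, sub_nonneg, div_le_iff₀ (norm_pos_iff.mpr hz)]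
    exact (neg_le_abs b).trans hab
  have hvariable : 0 ≤ (saddleVariable a b z).im := by
    rw [saddleVariable_im]
    exact mul_nonneg (csqrt_im_nonneg him) hfactor
  have hcoeff : |b / a ^ 2 - 1 / (2 * a ^ 3)| ≤ |b| / a ^ 2 + 1 / (2 * a ^ 3) := by
    refine (abs_sub _ _).trans_eq ?_
    rw [abs_div, abs_of_pos (by positivity : 0 < a ^ 2),
      abs_of_pos (by positivity : 0 < 1 / (2 * a ^ 3))]
  calc ‖saddleTerm a b * gaussTail (saddleVariable a b z)‖
      ≤ ‖(saddleTerm a b : ℂ)‖ * (√π / 2 * ‖Complex.exp (saddleVariable a b z ^ 2)‖) := by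
        rw [norm_mul]
        gcongr
        exact norm_gaussTail_le hvariable
    _ = √π / 2 * (|b / a ^ 2 - 1 / (2 * a ^ 3)| *
          rexp ((a ^ 2 : ℝ) * z + (b ^ 2 : ℝ) / z).re) := by
        rw [mul_left_comm, ← norm_mul, saddleTerm_mul_exp_saddleVariable_sq a b hz, norm_mul,
          Complex.norm_real, norm_eq_abs, Complex.norm_exp]
    _ ≤ _ := by gcongr

theorem norm_mainPrimitive_le {a b : ℝ} (ha : 0 < a) {z : ℂ} (hz : z ≠ 0)
    (him : 0 ≤ z.im) (hab : |b| ≤ a * ‖z‖) :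
    ‖mainPrimitive a b z‖ ≤ (√‖z‖ + √π * (|b| + 1 / (2 * a))) / a ^ 2 *
      rexp ((a ^ 2 : ℝ) * z + (b ^ 2 : ℝ) / z).re := by
  have hpos := norm_saddleTerm_mul_gaussTail_le ha hz him hab
  have hneg := norm_saddleTerm_mul_gaussTail_le (b := -b) ha hz him (by rwa [abs_neg])
  rw [abs_neg, neg_sq] at hneg
  have hmain : ‖mainIntegrand (a ^ 2) (b ^ 2) z / a ^ 2‖ =
      √‖z‖ * rexp ((a ^ 2 : ℝ) * z + (b ^ 2 : ℝ) / z).re / a ^ 2 := by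
    rw [norm_div, mainIntegrand, norm_mul, norm_csqrt, Complex.norm_exp, norm_pow,
      Complex.norm_real, norm_of_nonneg ha.le]
  refine (norm_sub_le _ _).trans ((add_le_add ((norm_sub_le _ _).trans
    (add_le_add hmain.le hpos)) hneg).trans_eq ?_)
  field_simp
  ring

theorem integral_mainIntegrand_line {a : ℝ} (b : ℝ) (ha : a ≠ 0) {y : ℝ} (hy : 0 < y) (s t : ℝ) :
    Complex.I * ∫ x in s..t, mainIntegrand (a ^ 2) (b ^ 2) (y + x * Complex.I) =
      mainPrimitive a b (y + t * Complex.I) - mainPrimitive a b (y + s * Complex.I) := by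
  rw [← intervalIntegral.integral_const_mul]
  refine intervalIntegral.integral_eq_sub_of_hasDerivAt
    (f := fun x : ℝ ↦ mainPrimitive a b (y + x * Complex.I)) (fun x _ ↦ ?_)
    ((continuous_mainIntegrand_line _ _ hy).const_mul _ |>.intervalIntegrable _ _)
  have hre : 0 < (y + x * Complex.I : ℂ).re := by simpa
  have h := (hasDerivAt_mainPrimitive b ha hre).comp (x : ℂ)
    (((hasDerivAt_id (x : ℂ)).mul_const Complex.I).const_add (y : ℂ))
  exact h.comp_ofReal.congr_deriv (by ring)

theorem norm_integral_mainIntegrand_sub_le_norm_mainPrimitive {a : ℝ} (b : ℝ) (ha : a ≠ 0) {y : ℝ}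
    (hy : 0 < y) (s : ℝ) :
    ‖(∫ x in -s..s, mainIntegrand (a ^ 2) (b ^ 2) (y + x * Complex.I)) -
      (√π * (saddleTerm a b + saddleTerm a (-b)) : ℝ)‖ ≤
      2 * ‖mainPrimitive a b (y + s * Complex.I)‖ := by
  have hconj : (y + (-s : ℝ) * Complex.I : ℂ) = conj (y + s * Complex.I : ℂ) := by simp
  have h := integral_mainIntegrand_line b ha hy (-s) s
  rw [hconj, mainPrimitive_sub_mainPrimitive_conj a b (by simpa), ← sub_eq_iff_eq_add,
    ← mul_sub] at h
  rw [← one_mul ‖_ - _‖, ← Complex.norm_I, ← norm_mul, h, two_mul]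
  exact (norm_sub_le _ _).trans_eq (by rw [Complex.norm_conj])

theorem re_mul_add_div_le (A : ℝ) {B : ℝ} (hB : 0 ≤ B) {z : ℂ} (hre : 0 ≤ z.re) (him : z.im ≠ 0) :
    (A * z + B / z).re ≤ A * z.re + B * (z.re / z.im ^ 2) := by
  rw [Complex.add_re, Complex.re_ofReal_mul, div_eq_mul_inv, Complex.re_ofReal_mul,
    Complex.inv_re, Complex.normSq_apply, ← sq, ← sq]
  gcongr
  exact le_add_of_nonneg_left (sq_nonneg _)

theorem norm_integral_mainIntegrand_sub_le {a b : ℝ} (ha : 0 < a) (hb : 0 < b) (hab : 4 * b ≤ a) :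
    ‖(∫ x in (-(1 / 2) : ℝ)..1 / 2, mainIntegrand (a ^ 2) (b ^ 2) ((b / a : ℝ) + x * Complex.I)) -
      (√π * (saddleTerm a b + saddleTerm a (-b)) : ℝ)‖ ≤
      2 * ((1 + √π * (b + 1 / (2 * a))) / a ^ 2 * rexp (a * b + 4 * b ^ 3 / a)) := by
  set z : ℂ := (b / a : ℝ) + (1 / 2 : ℝ) * Complex.I with hz
  have hre : z.re = b / a := by simp [z]
  have him : z.im = 1 / 2 := by simp [z]
  have hz₀ : z ≠ 0 := ne_zero_of_re_pos (by rw [hre]; positivity)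
  have hba : b / a ≤ 1 / 4 := by rw [div_le_iff₀ ha]; linarith
  have hnorm : ‖z‖ ≤ 1 := by
    refine (Complex.norm_le_abs_re_add_abs_im z).trans ?_
    rw [hre, him, abs_of_nonneg (by positivity), abs_of_nonneg (by norm_num)]
    linarith
  have hb_le : |b| ≤ a * ‖z‖ := by
    rw [abs_of_pos hb, mul_comm, ← div_le_iff₀ ha, ← hre]
    exact Complex.re_le_norm z
  refine (norm_integral_mainIntegrand_sub_le_norm_mainPrimitive b ha.ne' (by positivity) _).trans ?_
  rw [← hz]
  gcongr
  refine (norm_mainPrimitive_le ha hz₀ (by rw [him]; norm_num) hb_le).trans ?_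
  rw [abs_of_pos hb]
  gcongr
  · exact sqrt_le_one.mpr hnorm
  · refine (re_mul_add_div_le _ (sq_nonneg b) (by rw [hre]; positivity)
      (by rw [him]; norm_num)).trans_eq ?_
    rw [hre, him]
    field_simp
    norm_num

end MainPrimitive

section MainTerm

/-- The exponent `μ = (π / 6) √(24 x - 1)` in the asymptotics of the partition function. -/
noncomputable def growthExponent (x : ℝ) : ℝ := π / 6 * √(24 * x - 1)

/-- The first term `(√12 / (24 n - 1)) (1 - 1 / μ) exp μ` of Rademacher's expansion of `p n`, as a
function of `μ = growthExponent n`. -/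
noncomputable def mainTerm (μ : ℝ) : ℝ := π ^ 2 / (6 * √3) * ((μ - 1) / μ ^ 3 * rexp μ)

theorem growthExponent_eq_two_mul (x : ℝ) :
    growthExponent x = 2 * √(2 * π * (x - 1 / 24)) * √(π / 12) := by
  rw [mul_assoc, ← sqrt_mul' _ (by positivity),
    show 2 * π * (x - 1 / 24) * (π / 12) = (π / 12) ^ 2 * (24 * x - 1) by ring,
    sqrt_mul (by positivity), sqrt_sq (by positivity), growthExponent]
  ring

theorem sqrt_pi_mul_saddleTerm {a : ℝ} (ha : a ≠ 0) :
    √π * saddleTerm a (√(π / 12)) = mainTerm (2 * a * √(π / 12)) := by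
  have h12 : √12 = 2 * √3 := by
    rw [show (12 : ℝ) = 2 ^ 2 * 3 by norm_num, sqrt_mul (by norm_num), sqrt_sq (by norm_num)]
  have hπ : π ^ 2 = √π ^ 4 := by rw [show 4 = 2 * 2 from rfl, pow_mul, sq_sqrt pi_pos.le]
  have h3 : √3 ^ 2 = 3 := sq_sqrt (by norm_num)
  have : √π ≠ 0 := by positivity
  rw [saddleTerm, mainTerm, hπ, sqrt_div' _ (by norm_num), h12]
  field_simp
  rw [h3]
  ring

theorem two_mul_exp_tail_le {a b : ℝ} (hb : 0 < b) (hb₁ : b ≤ 1) (hab : 4 * b ≤ a) :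
    2 * rexp (a ^ 2 * (b / a) + b ^ 2 * (1 / (4 * (b / a)) + b / a)) ≤
      4 * rexp (5 / 4 * (a * b)) := by
  have ha : 0 < a := by linarith
  have hsplit : a ^ 2 * (b / a) + b ^ 2 * (1 / (4 * (b / a)) + b / a) =
      b ^ 2 * (b / a) + 5 / 4 * (a * b) := by
    field_simp
    ring
  have hratio : b / a ≤ 1 / 4 := by rw [div_le_iff₀ ha]; linarith
  have hsmall : b ^ 2 * (b / a) ≤ 1 / 2 := by nlinarith
  have hexp : rexp (1 / 2) ≤ 2 := by
    have hsq : rexp (1 / 2) ^ 2 = rexp 1 := by rw [← Real.exp_nat_mul]; norm_num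
    nlinarith [Real.exp_one_lt_d9, Real.exp_pos (1 / 2)]
  rw [hsplit, Real.exp_add]
  have := (Real.exp_le_exp.mpr hsmall).trans hexp
  nlinarith [Real.exp_pos (5 / 4 * (a * b))]

theorem sqrt_pi_le : √π ≤ 9 / 5 := sqrt_le_iff.mpr ⟨by norm_num, by linarith [pi_lt_d2]⟩

theorem endpoint_error_le {a b : ℝ} (hb : 0 < b) (hb₁ : b ≤ 1) (ha : 5 ≤ a) (hab : 4 * b ≤ a) :
    2 * ((1 + √π * (b + 1 / (2 * a))) / a ^ 2 * rexp (a * b + 4 * b ^ 3 / a)) ≤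
      1 / 2 * rexp (5 / 4 * (a * b)) := by
  have hexponent : 4 * b ^ 3 / a ≤ 1 / 4 * (a * b) := by
    rw [div_le_iff₀ (by linarith)]
    nlinarith [mul_le_mul hab hab (by positivity) (by linarith)]
  calc _ ≤ 2 * ((1 + 9 / 5 * (1 + 1 / (2 * 5))) / 5 ^ 2 * rexp (a * b + 1 / 4 * (a * b))) := by
        have := sqrt_pi_le
        gcongr
    _ = 2 * ((1 + 9 / 5 * (1 + 1 / (2 * 5))) / 5 ^ 2) * rexp (5 / 4 * (a * b)) := by ring_nf
    _ ≤ _ := by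
        gcongr
        norm_num

theorem abs_saddleTerm_neg_le {a b : ℝ} (hb : 0 < b) (hb₁ : b ≤ 1) (ha : 5 ≤ a) :
    |√π * saddleTerm a (-b)| ≤ 1 / 2 * rexp (5 / 4 * (a * b)) := by
  have : 0 < a := by linarith
  have habs : |√π * saddleTerm a (-b)| =
      √π * (b / a ^ 2 + 1 / (2 * a ^ 3)) * rexp (-(2 * a * b)) := by
    rw [saddleTerm, neg_div, ← neg_add', mul_neg, neg_mul, mul_neg, abs_neg,
      abs_of_nonneg (by positivity)]
    ring
  rw [habs]
  calc _ ≤ 9 / 5 * (1 / 5 ^ 2 + 1 / (2 * 5 ^ 3)) * rexp (5 / 4 * (a * b)) := by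
        have := sqrt_pi_le
        have : 0 < a * b := by positivity
        gcongr
        linarith
    _ ≤ _ := by
        gcongr
        norm_num

theorem abs_p_sub_saddleTerm_add_le {n : ℕ} {a b : ℝ} (ha2 : a ^ 2 = 2 * π * (n - 1 / 24))
    (hb2 : b ^ 2 = π / 12) (hb : 0 < b) (ha : 5 ≤ a) :
    |p n - √π * (saddleTerm a b + saddleTerm a (-b))| ≤ 9 / 2 * rexp (5 / 4 * (a * b)) := by
  have hb₁ : b ≤ 1 := by nlinarith [pi_lt_four]
  have ha₀ : 0 < a := by linarith
  have hab : 4 * b ≤ a := by linarith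
  have htail := norm_p_sub_integral_mainIntegrand_le n (y := b / a) (by positivity)
    (by rw [div_le_iff₀ ha₀]; linarith)
  rw [← ha2, ← hb2] at htail
  have htail' := htail.trans (two_mul_exp_tail_le hb hb₁ hab)
  have hends := (norm_integral_mainIntegrand_sub_le ha₀ hb hab).trans
    (endpoint_error_le hb hb₁ ha hab)
  have htriangle := (norm_sub_le_norm_sub_add_norm_sub _ _ _).trans (add_le_add htail' hends)
  rw [← Complex.ofReal_sub, Complex.norm_real, norm_eq_abs] at htriangle
  linarith

theorem abs_p_sub_mainTerm_le {n : ℕ} (hn : 5 ≤ n) :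
    |p n - mainTerm (growthExponent n)| ≤ 5 * rexp (5 / 8 * growthExponent n) := by
  have hn' : (5 : ℝ) ≤ n := by exact_mod_cast hn
  have ha2 : √(2 * π * (n - 1 / 24)) ^ 2 = 2 * π * (n - 1 / 24) :=
    sq_sqrt (mul_nonneg (by positivity) (by linarith))
  have ha : 5 ≤ √(2 * π * (n - 1 / 24)) := le_sqrt_of_sq_le (by nlinarith [pi_gt_three])
  have hb2 : √(π / 12) ^ 2 = π / 12 := sq_sqrt (by positivity)
  have hb : 0 < √(π / 12) := by positivity
  have hb₁ : √(π / 12) ≤ 1 := sqrt_le_one.mpr (by linarith [pi_lt_four])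
  rw [growthExponent_eq_two_mul, ← sqrt_pi_mul_saddleTerm (by linarith)]
  have hboth := abs_p_sub_saddleTerm_add_le ha2 hb2 hb ha
  have hother := abs_saddleTerm_neg_le hb hb₁ ha
  generalize √(2 * π * (n - 1 / 24)) = a at *
  generalize √(π / 12) = b at *
  calc |p n - √π * saddleTerm a b|
      = |(p n - √π * (saddleTerm a b + saddleTerm a (-b))) + √π * saddleTerm a (-b)| := by ring_nf
    _ ≤ 9 / 2 * rexp (5 / 4 * (a * b)) + 1 / 2 * rexp (5 / 4 * (a * b)) :=
        (abs_add_le _ _).trans (add_le_add hboth hother)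
    _ = 5 * rexp (5 / 8 * (2 * a * b)) := by ring_nf

end MainTerm

section ThirdDifference

open Set

theorem mul_pow_le_fwdDiff_iter {h : ℝ} (hh : 0 < h) {n : ℕ} {F : ℕ → ℝ → ℝ} {x m : ℝ}
    (hF : ∀ k < n, ∀ t ∈ Icc x (x + n * h), HasDerivAt (F k) (F (k + 1) t) t)
    (hm : ∀ t ∈ Icc x (x + n * h), m ≤ F n t) : m * h ^ n ≤ (fwdDiff h)^[n] (F 0) x := by
  induction n generalizing F m with
  | zero => simpa using hm x (by simp)
  | succ n ih =>
    push_cast at hF hm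
    have hmem {t s : ℝ} (ht : t ∈ Icc x (x + n * h)) (hs : s ∈ Icc t (t + h)) :
        s ∈ Icc x (x + (n + 1) * h) := ⟨ht.1.trans hs.1, by linarith [ht.2, hs.2]⟩
    have hend {t : ℝ} : t ∈ Icc t (t + h) ∧ t + h ∈ Icc t (t + h) := by simp [hh.le]
    rw [Function.iterate_succ_apply, pow_succ', ← mul_assoc]
    refine ih (F := fun k ↦ fwdDiff h (F k)) (fun k hk t ht ↦ ?_) (fun t ht ↦ ?_)
    · exact ((hF k (by lia) _ (hmem ht hend.2)).comp_add_const t h).sub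
        (hF k (by lia) t (hmem ht hend.1))
    · obtain ⟨s, hs, hslope⟩ := exists_hasDerivAt_eq_slope (F n) (F (n + 1))
        (lt_add_of_pos_right t hh)
        (fun s hs ↦ (hF n (by lia) s (hmem ht hs)).continuousAt.continuousWithinAt)
        (fun s hs ↦ hF n (by lia) s (hmem ht (Ioo_subset_Icc_self hs)))
      rw [add_sub_cancel_left, eq_div_iff hh.ne'] at hslope
      rw [fwdDiff, ← hslope]
      exact mul_le_mul_of_nonneg_right (hm s (hmem ht (Ioo_subset_Icc_self hs))) hh.le

theorem norm_fwdDiff_iter_le {M G : Type*} [AddCommMonoid M] [SeminormedAddCommGroup G]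
    {f : M → G} {h x : M} {n : ℕ} {ε : ℝ} (hf : ∀ k ≤ n, ‖f (x + k • h)‖ ≤ ε) :
    ‖(fwdDiff h)^[n] f x‖ ≤ 2 ^ n * ε := by
  induction n generalizing x with
  | zero => simpa using hf 0 le_rfl
  | succ n ih =>
    rw [Function.iterate_succ_apply', fwdDiff]
    have hshift : ∀ k ≤ n, ‖f (x + h + k • h)‖ ≤ ε := fun k hk ↦ by
      simpa only [add_assoc, succ_nsmul'] using hf (k + 1) (by lia)
    calc _ ≤ 2 ^ n * ε + 2 ^ n * ε :=
          norm_sub_le_of_le (ih hshift) (ih fun k hk ↦ hf k (by lia))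
      _ = 2 ^ (n + 1) * ε := by ring

theorem fwdDiff_iter_three {M : Type*} [AddCommMonoidWithOne M] (f : M → ℝ) (x : M) :
    (fwdDiff 1)^[3] f x = f (x + 3) - 3 * f (x + 2) + 3 * f (x + 1) - f x := by
  have htwo : (2 : M) = 1 + 1 := one_add_one_eq_two.symm
  have hthree : (3 : M) = 1 + (1 + 1) := by rw [one_add_one_eq_two, add_comm, two_add_one_eq_three]
  simp only [Function.iterate_succ_apply', Function.iterate_zero_apply, fwdDiff, htwo, hthree,
    add_assoc]
  ring

theorem fwdDiff_iter_three_log_pos {M : Type*} [AddCommMonoidWithOne M] {f : M → ℝ}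
    (hf : ∀ x, 0 < f x) {x : M} (h : f (x + 2) ^ 3 * f x < f (x + 3) * f (x + 1) ^ 3) :
    0 < (fwdDiff 1)^[3] (fun y ↦ log (f y)) x := by
  have h₀ := hf x
  have h₁ := hf (x + 1)
  have h₂ := hf (x + 2)
  have h₃ := hf (x + 3)
  have hlog := log_lt_log (by positivity) h
  rw [log_mul (by positivity) h₀.ne', log_mul h₃.ne' (by positivity), log_pow, log_pow,
    Nat.cast_ofNat] at hlog
  rw [fwdDiff_iter_three]
  linarith

end ThirdDifference

section LogMain

theorem hasDerivAt_growthExponent {x : ℝ} (hx : 1 / 24 < x) :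
    HasDerivAt growthExponent (π ^ 2 / 3 / growthExponent x) x := by
  have hpos : 0 < 24 * x - 1 := by linarith
  have := ((((hasDerivAt_id x).const_mul 24).sub_const 1).sqrt (by simpa using hpos.ne')).const_mul
    (π / 6)
  refine this.congr_deriv ?_
  have : 0 < √(24 * x - 1) := by positivity
  simp only [growthExponent, id]
  field_simp
  norm_num

theorem growthExponent_sq {x : ℝ} (hx : 1 / 24 ≤ x) :
    growthExponent x ^ 2 = π ^ 2 / 36 * (24 * x - 1) := by
  rw [growthExponent, mul_pow, sq_sqrt (by linarith)]
  ring

theorem monotone_growthExponent : Monotone growthExponent := fun _ _ h ↦ by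
  unfold growthExponent
  gcongr

theorem one_hundred_le_growthExponent {x : ℝ} (hx : 1598 ≤ x) : 100 ≤ growthExponent x := by
  refine le_of_sq_le_sq ?_ (by unfold growthExponent; positivity)
  rw [growthExponent_sq (by linarith)]
  nlinarith [pi_gt_d2, pi_pos]

theorem growthExponent_add_three_le {x : ℝ} (hx : 1598 ≤ x) :
    growthExponent (x + 3) ≤ growthExponent x + 1 := by
  have h100 := one_hundred_le_growthExponent hx
  have hsq := growthExponent_sq (x := x) (by linarith)
  refine le_of_sq_le_sq ?_ (by linarith)
  rw [growthExponent_sq (by linarith)]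
  nlinarith [pi_lt_d2, pi_pos]

/-- The logarithm of `mainTerm m`, up to an additive constant. -/
noncomputable def logMain (m : ℝ) : ℝ := m - 3 * log m + log (m - 1)

/-- The first iterates of `logMain` under the operator `G ↦ (1 / m) dG/dm`, which is the derivative
in `n` up to the factor `π ^ 2 / 3` since `dμ/dn = (π ^ 2 / 3) / μ` for `μ = growthExponent n`.
Orders above `3` get the junk value `0`. -/
noncomputable def logMainDeriv : ℕ → ℝ → ℝ
  | 0, m => logMain m
  | 1, m => 1 / m - 3 / m ^ 2 + 1 / (m * (m - 1))
  | 2, m => -1 / m ^ 3 + 6 / m ^ 4 - (2 * m - 1) / (m ^ 3 * (m - 1) ^ 2)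
  | 3, m => (3 - 24 / m + (8 * m ^ 2 - 9 * m + 3) / (m - 1) ^ 3) / m ^ 5
  | _ + 4, _ => 0

theorem hasDerivAt_logMainDeriv {k : ℕ} (hk : k < 3) {m : ℝ} (hm : 1 < m) :
    HasDerivAt (logMainDeriv k) (m * logMainDeriv (k + 1) m) m := by
  have hm₀ : m ≠ 0 := by linarith
  have hm₁ : m - 1 ≠ 0 := by linarith
  have hid := hasDerivAt_id m
  have hone := hid.sub_const 1
  interval_cases k
  · refine ((hid.sub ((hasDerivAt_log hm₀).const_mul 3)).add (hone.log hm₁)).congr_deriv ?_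
    simp only [id, logMainDeriv]
    field_simp
  · refine ((((hasDerivAt_const m (1 : ℝ)).div hid hm₀).sub
      ((hasDerivAt_const m (3 : ℝ)).div (hid.pow 2) (pow_ne_zero 2 hm₀))).add
      ((hasDerivAt_const m (1 : ℝ)).div (hid.mul hone) (mul_ne_zero hm₀ hm₁))).congr_deriv ?_
    simp only [id, logMainDeriv, Pi.pow_apply, Pi.mul_apply]
    field_simp
    ring
  · refine ((((hasDerivAt_const m (-1 : ℝ)).div (hid.pow 3) (pow_ne_zero 3 hm₀)).add
      ((hasDerivAt_const m (6 : ℝ)).div (hid.pow 4) (pow_ne_zero 4 hm₀))).sub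
      (((hid.const_mul 2).sub_const 1).div ((hid.pow 3).mul (hone.pow 2))
        (mul_ne_zero (pow_ne_zero 3 hm₀) (pow_ne_zero 2 hm₁)))).congr_deriv ?_
    simp only [id, logMainDeriv, Pi.pow_apply, Pi.mul_apply]
    field_simp
    ring

theorem le_logMainDeriv_three {m : ℝ} (hm : 100 ≤ m) :
    27 / 10 / m ^ 5 ≤ logMainDeriv 3 m := by
  have : 0 ≤ (8 * m ^ 2 - 9 * m + 3) / (m - 1) ^ 3 :=
    div_nonneg (by nlinarith) (pow_nonneg (by linarith) 3)
  have : 24 / m ≤ 24 / 100 := by gcongr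
  rw [logMainDeriv]
  gcongr
  linarith

theorem le_fwdDiff_logMain {x : ℝ} (hx : 1598 ≤ x) :
    (π ^ 2 / 3) ^ 3 * (27 / 10 / growthExponent (x + 3) ^ 5) ≤
      (fwdDiff 1)^[3] (logMain ∘ growthExponent) x := by
  have h100 {t : ℝ} (ht : t ∈ Set.Icc x (x + (3 : ℕ) * 1)) : 100 ≤ growthExponent t :=
    one_hundred_le_growthExponent (hx.trans ht.1)
  have hderiv : ∀ k < 3, ∀ t ∈ Set.Icc x (x + (3 : ℕ) * 1),
      HasDerivAt (fun t ↦ (π ^ 2 / 3) ^ k * logMainDeriv k (growthExponent t))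
        ((π ^ 2 / 3) ^ (k + 1) * logMainDeriv (k + 1) (growthExponent t)) t := fun k hk t ht ↦ by
    have hμ := h100 ht
    have hcomp := (hasDerivAt_logMainDeriv hk (by linarith)).comp t
      (hasDerivAt_growthExponent (by linarith [ht.1]))
    refine (hcomp.const_mul ((π ^ 2 / 3) ^ k)).congr_deriv ?_
    field_simp
    ring
  have hlower : ∀ t ∈ Set.Icc x (x + (3 : ℕ) * 1),
      (π ^ 2 / 3) ^ 3 * (27 / 10 / growthExponent (x + 3) ^ 5) ≤
        (π ^ 2 / 3) ^ 3 * logMainDeriv 3 (growthExponent t) := fun t ht ↦ by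
    have hμ := h100 ht
    have hmono : growthExponent t ≤ growthExponent (x + 3) :=
      monotone_growthExponent (by simpa using ht.2)
    grw [← le_logMainDeriv_three hμ]
    gcongr
  simpa [Function.comp_def, logMainDeriv] using
    mul_pow_le_fwdDiff_iter one_pos
      (F := fun k t ↦ (π ^ 2 / 3) ^ k * logMainDeriv k (growthExponent t)) hderiv hlower

end LogMain

section LargeIndices

theorem log_mainTerm {m : ℝ} (hm : 1 < m) :
    log (mainTerm m) = log (π ^ 2 / (6 * √3)) + logMain m := by
  have hm₁ : 0 < m - 1 := by linarith
  rw [mainTerm, log_mul (by positivity) (by positivity),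
    log_mul (x := (m - 1) / m ^ 3) (by positivity) (by positivity),
    log_div hm₁.ne' (by positivity), log_pow, log_exp, logMain]
  push_cast
  ring

theorem abs_log_sub_log_le {u v ε : ℝ} (hu : 0 < u) (hε : 2 * ε ≤ 1) (h : |v - u| ≤ ε * u) :
    |log v - log u| ≤ 2 * ε := by
  obtain ⟨hlower, hupper⟩ := abs_le.mp h
  have hε₀ : 0 ≤ ε := nonneg_of_mul_nonneg_left ((abs_nonneg _).trans h) hu
  have hv : 0 < v := by nlinarith
  have log_sub_log_le {a b : ℝ} (ha : 0 < a) (hb : 0 < b) (hab : b ≤ (1 + 2 * ε) * a) :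
      log b - log a ≤ 2 * ε := by
    rw [← log_div hb.ne' ha.ne']
    have := log_le_sub_one_of_pos (div_pos hb ha)
    have : b / a ≤ 1 + 2 * ε := (div_le_iff₀ ha).mpr hab
    linarith
  exact abs_sub_le_iff.mpr
    ⟨log_sub_log_le hu hv (by nlinarith), log_sub_log_le hv hu (by nlinarith)⟩

theorem two_mul_add_one_pow_seven_lt_exp {m : ℝ} (hm : 100 ≤ m) :
    2 * (m + 1) ^ 7 < rexp (3 / 8 * m) := by
  have htangent : m + 1 ≤ 101 * rexp ((m - 100) / 101) := by
    linarith [add_one_le_exp ((m - 100) / 101)]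
  have hexp : (2.7 : ℝ) ^ 37 ≤ rexp 37 := by
    have : (2.7 : ℝ) ≤ rexp 1 := by linarith [exp_one_gt_d9]
    grw [this, ← exp_nat_mul]
    norm_num
  calc 2 * (m + 1) ^ 7 ≤ 2 * (101 * rexp ((m - 100) / 101)) ^ 7 := by gcongr
    _ = 2 * 101 ^ 7 * rexp (7 * ((m - 100) / 101)) := by
      rw [mul_pow, ← exp_nat_mul]
      push_cast
      ring
    _ < 2.7 ^ 37 * rexp (7 * ((m - 100) / 101)) := by gcongr; norm_num
    _ ≤ rexp 37 * rexp (3 / 8 * m - 37) := by gcongr; linarith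
    _ = rexp (3 / 8 * m) := by rw [← exp_add]; ring_nf

theorem five_mul_exp_le_mul_mainTerm {m : ℝ} (hm : 100 ≤ m) :
    5 * rexp (5 / 8 * m) ≤ 6 * m ^ 2 / rexp (3 / 8 * m) * mainTerm m := by
  have hsqrt : √3 ≤ 1.733 := sqrt_le_iff.mpr (by norm_num)
  have hconst : 9 / 10 ≤ π ^ 2 / (6 * √3) := by
    rw [le_div_iff₀ (by positivity)]
    nlinarith [pi_gt_d2]
  have hratio : 99 / 100 ≤ (m - 1) / m := by
    rw [le_div_iff₀ (by linarith)]
    linarith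
  have hexp : rexp m = rexp (5 / 8 * m) * rexp (3 / 8 * m) := by rw [← exp_add]; ring_nf
  calc 5 * rexp (5 / 8 * m) ≤ 6 * (9 / 10) * (99 / 100) * rexp (5 / 8 * m) := by
        gcongr
        norm_num
    _ ≤ 6 * (π ^ 2 / (6 * √3)) * ((m - 1) / m) * rexp (5 / 8 * m) := by gcongr
    _ = 6 * m ^ 2 / rexp (3 / 8 * m) * mainTerm m := by
        rw [mainTerm, hexp]
        field_simp

theorem abs_log_p_sub_logMain_le {n : ℕ} (hn : 1598 ≤ n) :
    |log (p n) - (log (π ^ 2 / (6 * √3)) + logMain (growthExponent n))| ≤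
      12 * growthExponent n ^ 2 / rexp (3 / 8 * growthExponent n) := by
  have hm := one_hundred_le_growthExponent (x := n) (by exact_mod_cast hn)
  have happrox := abs_p_sub_mainTerm_le (n := n) (by lia)
  generalize growthExponent n = m at *
  have hpos : 0 < mainTerm m := by
    have : 0 < m - 1 := by linarith
    unfold mainTerm
    positivity
  have hdouble : 2 * (6 * m ^ 2 / rexp (3 / 8 * m)) = 12 * m ^ 2 / rexp (3 / 8 * m) := by ring
  have hsmall : 12 * m ^ 2 / rexp (3 / 8 * m) ≤ 1 := by
    have hexp := two_mul_add_one_pow_seven_lt_exp hm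
    have : m ^ 2 * 100 ^ 5 ≤ (m + 1) ^ 2 * (m + 1) ^ 5 := by gcongr <;> linarith
    rw [div_le_one (exp_pos _)]
    nlinarith [sq_nonneg m]
  rw [← log_mainTerm (by linarith), ← hdouble]
  exact abs_log_sub_log_le hpos (hdouble ▸ hsmall)
    (happrox.trans (five_mul_exp_le_mul_mainTerm hm))

theorem abs_fwdDiff_log_p_sub_le {n : ℕ} (hn : 1598 ≤ n) :
    |(fwdDiff 1)^[3] (fun k : ℕ ↦ log (p k)) n - (fwdDiff 1)^[3] (logMain ∘ growthExponent) n| ≤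
      2 ^ 3 * (12 * (growthExponent n + 1) ^ 2 / rexp (3 / 8 * growthExponent n)) := by
  have hn' : (1598 : ℝ) ≤ n := by exact_mod_cast hn
  let error (k : ℕ) : ℝ := log (p k) - (log (π ^ 2 / (6 * √3)) + logMain (growthExponent k))
  have herror : ∀ k ≤ 3, ‖error (n + k • 1)‖ ≤
      12 * (growthExponent n + 1) ^ 2 / rexp (3 / 8 * growthExponent n) := fun k hk ↦ by
    have hlower : growthExponent n ≤ growthExponent (n + k • 1 : ℕ) :=
      monotone_growthExponent (by simp)
    have hupper : growthExponent (n + k • 1 : ℕ) ≤ growthExponent n + 1 :=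
      (monotone_growthExponent (by simpa using hk)).trans (growthExponent_add_three_le hn')
    have hpos := one_hundred_le_growthExponent hn'
    refine (abs_log_p_sub_logMain_le (by lia)).trans ?_
    gcongr
    linarith
  refine le_trans (le_of_eq ?_) (norm_fwdDiff_iter_le herror)
  simp only [fwdDiff_iter_three, Function.comp, norm_eq_abs, error]
  push_cast
  ring_nf

theorem third_difference_log_p_pos_of_ge {n : ℕ} (hn : 1598 ≤ n) :
    0 < (fwdDiff 1)^[3] (fun k : ℕ ↦ log (p k)) n := by
  have hn' : (1598 : ℝ) ≤ n := by exact_mod_cast hn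
  have herror := (abs_le.mp (abs_fwdDiff_log_p_sub_le hn)).1
  have hmain := le_fwdDiff_logMain hn'
  have hupper := growthExponent_add_three_le hn'
  have hm := one_hundred_le_growthExponent hn'
  have hpos : 100 ≤ growthExponent (n + 3) := one_hundred_le_growthExponent (by linarith)
  set m := growthExponent n
  have hπ : 30 ≤ (π ^ 2 / 3) ^ 3 := by
    calc (30 : ℝ) ≤ (3.14 ^ 2 / 3) ^ 3 := by norm_num
      _ ≤ _ := by gcongr; exact pi_gt_d2.le
  have hlt : 2 ^ 3 * (12 * (m + 1) ^ 2 / rexp (3 / 8 * m)) < 30 * (27 / 10 / (m + 1) ^ 5) := by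
    have hexp := two_mul_add_one_pow_seven_lt_exp hm
    have : 0 < (m + 1) ^ 7 := by positivity
    rw [mul_div_assoc', mul_div_assoc', div_lt_div_iff₀ (exp_pos _) (by positivity)]
    linarith
  have hle : 30 * (27 / 10 / (m + 1) ^ 5) ≤
      (π ^ 2 / 3) ^ 3 * (27 / 10 / growthExponent (n + 3) ^ 5) := by gcongr
  linarith

end LargeIndices

section SmallIndices

open Finset Polynomial

theorem eval_trunc_mul_eval {R : Type*} [CommRing R] {f : PowerSeries R} {P Q : R[X]}
    (h : f * P = Q) {b : R} {n : ℕ} (hb : b ^ n = 0) :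
    (f.trunc n).eval b * P.eval b = Q.eval b := by
  have hdvd : X ^ n ∣ f.trunc n * P - Q := by
    rw [X_pow_dvd_iff]
    intro d hd
    rw [coeff_sub, sub_eq_zero, ← coeff_coe, ← coeff_coe, ← h, Polynomial.coe_mul,
      ← PowerSeries.coeff_coe_trunc_of_lt hd, PowerSeries.trunc_trunc_mul,
      PowerSeries.coeff_coe_trunc_of_lt hd]
  obtain ⟨S, hS⟩ := hdvd
  rw [← eval_mul, ← sub_eq_zero, ← eval_sub, hS, eval_mul, eval_pow, eval_X, hb, zero_mul]

theorem sum_card_partition_mul_pow_mul_prod {R : Type*} [CommRing R] {b : R} {N : ℕ}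
    (hb : b ^ (N + 1) = 0) :
    (∑ n ∈ range (N + 1), (Fintype.card (Nat.Partition n) : R) * b ^ n) *
      ∏ i ∈ range N, (1 - b ^ (i + 1)) = 1 := by
  have h : (PowerSeries.mk fun n ↦ (boundedPartitionCount N n : R)) *
      (∏ i ∈ range N, (1 - X ^ (i + 1)) : R[X]) = (1 : R[X]) := by
    rw [← coeToPowerSeries.ringHom_apply (φ := ∏ i ∈ range N, _), map_prod]
    simpa using mk_boundedPartitionCount_mul_prod R N
  have heval := eval_trunc_mul_eval h hb
  rw [eval_prod, eval_one, eval, PowerSeries.eval₂_trunc_eq_sum_range] at heval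
  simp only [eval_sub, eval_one, eval_pow, eval_X, PowerSeries.coeff_mk, RingHom.id_apply] at heval
  rwa [sum_congr rfl fun n hn ↦ by
    rw [boundedPartitionCount_eq_of_le (mem_range_succ_iff.mp hn)]] at heval

theorem sum_mul_pow_lt_pow {c : ℕ → ℕ} {b N : ℕ} (hc : ∀ n < N, c n < b) :
    ∑ n ∈ range N, c n * b ^ n < b ^ N := by
  induction N with
  | zero => simp
  | succ N ih =>
    calc ∑ n ∈ range (N + 1), c n * b ^ n < b ^ N + c N * b ^ N := by
          rw [sum_range_succ]
          gcongr
          exact ih fun n hn ↦ hc n (by lia)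
      _ = (c N + 1) * b ^ N := by ring
      _ ≤ b * b ^ N := by
          gcongr
          exact hc N (by lia)
      _ = b ^ (N + 1) := by ring

theorem sum_mul_pow_div_pow_mod {c : ℕ → ℕ} {b N i : ℕ} (hc : ∀ n < N, c n < b) (hi : i < N) :
    (∑ n ∈ range N, c n * b ^ n) / b ^ i % b = c i := by
  induction N generalizing c i with
  | zero => lia
  | succ N ih =>
    have hb : 0 < b := (hc 0 (by lia)).pos
    have hsplit : ∑ n ∈ range (N + 1), c n * b ^ n =
        c 0 + b * ∑ n ∈ range N, c (n + 1) * b ^ n := by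
      rw [sum_range_succ', mul_sum, add_comm]
      simp only [pow_succ', pow_zero, mul_one, mul_left_comm]
    rw [hsplit]
    cases i with
    | zero => simp [Nat.mod_eq_of_lt (hc 0 (by lia))]
    | succ i =>
      rw [pow_succ', ← Nat.div_div_eq_div_mul, Nat.add_mul_div_left _ _ hb,
        Nat.div_eq_of_lt (hc 0 (by lia)), zero_add]
      exact ih (fun n hn ↦ hc (n + 1) (by lia)) (by lia)

/-- The residue modulo `M` of `∏ i < n, (1 - b ^ (i + 1))`, in a form which the kernel evaluates
with natural number arithmetic. -/
def eulerProductMod (b M : ℕ) : ℕ → ℕ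
  | 0 => 1
  | n + 1 => (eulerProductMod b M n + (M - eulerProductMod b M n * b ^ (n + 1) % M)) % M

theorem natCast_eulerProductMod (b : ℕ) {M : ℕ} (hM : 0 < M) (n : ℕ) :
    (eulerProductMod b M n : ZMod M) = ∏ i ∈ range n, (1 - (b : ZMod M) ^ (i + 1)) := by
  induction n with
  | zero => simp [eulerProductMod]
  | succ n ih =>
    rw [prod_range_succ, ← ih, eulerProductMod, ZMod.natCast_mod, Nat.cast_add,
      Nat.cast_sub (Nat.mod_lt _ hM).le, ZMod.natCast_mod, ZMod.natCast_self]
    push_cast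
    ring

/-- Newton iterates for the inverse of `a` modulo `M`. They converge if `a - 1` is nilpotent
modulo `M`, doubling the order of vanishing of the error at each step. -/
def newtonInverseMod (a M : ℕ) : ℕ → ℕ
  | 0 => 1
  | n + 1 => newtonInverseMod a M n * (2 + (M - a * newtonInverseMod a M n % M)) % M

theorem eq_sum_card_partition_mul_pow {b N T : ℕ}
    (hcard : ∀ n < N + 1, Fintype.card (Nat.Partition n) < b) (hT : T < b ^ (N + 1))
    (hinv : T * eulerProductMod b (b ^ (N + 1)) N % b ^ (N + 1) = 1 % b ^ (N + 1)) :
    T = ∑ n ∈ range (N + 1), Fintype.card (Nat.Partition n) * b ^ n := by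
  have hb : 0 < b := (hcard 0 (by lia)).pos
  have hpow : (b : ZMod (b ^ (N + 1))) ^ (N + 1) = 0 := by
    exact_mod_cast ZMod.natCast_self (b ^ (N + 1))
  have hsum := sum_card_partition_mul_pow_mul_prod hpow
  have hprod := (ZMod.natCast_eq_natCast_iff' _ _ _).mpr hinv
  rw [Nat.cast_mul, Nat.cast_one, natCast_eulerProductMod _ (by positivity)] at hprod
  have heq := (IsUnit.of_mul_eq_one_right _ hsum).mul_left_injective (hprod.trans hsum.symm)
  refine Nat.ModEq.eq_of_lt_of_lt ?_ hT (sum_mul_pow_lt_pow hcard)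
  rw [← ZMod.natCast_eq_natCast_iff, heq]
  push_cast
  rfl

theorem card_partition_lt_two_pow {n : ℕ} (hn : n ≤ 1600) :
    Fintype.card (Nat.Partition n) < 2 ^ 160 := by
  have hn' : (n : ℝ) ≤ 1600 := by exact_mod_cast hn
  have hexp : rexp 103 < 2.7182818286 ^ 103 := by
    rw [← mul_one 103, ← Nat.cast_ofNat, exp_nat_mul]
    gcongr
    exact exp_one_lt_d9
  have h : p n < 2 ^ 160 := calc
    p n ≤ rexp (2 * π * n * (1 / 200)) * (2 * rexp (π / 12 * (1 / (1 / 200) - 1 / 200))) := by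
      grw [p_le_exp_mul_one_add_partitionTail (t := 1 / 200) (by norm_num) n,
        one_add_partitionTail_le (by norm_num) (by norm_num)]
    _ = 2 * rexp (2 * π * n * (1 / 200) + π / 12 * (1 / (1 / 200) - 1 / 200)) := by
      rw [exp_add]
      ring
    _ ≤ 2 * rexp 103 := by
      gcongr
      nlinarith [pi_lt_d2, pi_pos]
    _ < 2 ^ 160 := by linarith
  unfold p at h
  exact_mod_cast h

/-- Kronecker substitution: the number whose base `2 ^ 160` digits are the numbers of partitions
of `0, 1, …, 1600`, found as an inverse of Euler's product. It is irreducible because only the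
kernel can evaluate numbers of this size in reasonable time. -/
@[irreducible] def partitionTable : ℕ :=
  newtonInverseMod (eulerProductMod (2 ^ 160) ((2 ^ 160) ^ (1600 + 1)) 1600)
    ((2 ^ 160) ^ (1600 + 1)) 11

/-- The base `2 ^ 160` digit of `partitionTable` at position `n`. -/
@[irreducible] def tableDigit (n : ℕ) : ℕ := partitionTable / (2 ^ 160) ^ n % 2 ^ 160

theorem partitionTable_lt : partitionTable < (2 ^ 160) ^ (1600 + 1) := by decide +kernel

theorem partitionTable_mul_eulerProductMod :
    partitionTable * eulerProductMod (2 ^ 160) ((2 ^ 160) ^ (1600 + 1)) 1600 %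
      (2 ^ 160) ^ (1600 + 1) = 1 % (2 ^ 160) ^ (1600 + 1) := by
  decide +kernel

theorem tableDigit_pow_three_mul_lt : ∀ n < 1483,
    tableDigit (n + 117) ^ 3 * tableDigit (n + 115) <
      tableDigit (n + 118) * tableDigit (n + 116) ^ 3 := by
  decide +kernel

theorem tableDigit_eq {n : ℕ} (hn : n ≤ 1600) :
    tableDigit n = Fintype.card (Nat.Partition n) := by
  have hcard : ∀ n < 1600 + 1, Fintype.card (Nat.Partition n) < 2 ^ 160 := fun n hn ↦
    card_partition_lt_two_pow (by lia)
  rw [tableDigit, eq_sum_card_partition_mul_pow (b := 2 ^ 160) (N := 1600) hcard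
    partitionTable_lt partitionTable_mul_eulerProductMod]
  exact sum_mul_pow_div_pow_mod hcard (by lia)

theorem third_difference_log_p_pos_of_lt {n : ℕ} (hn : 115 ≤ n) (hn' : n < 1598) :
    0 < (fwdDiff 1)^[3] (fun k : ℕ ↦ log (p k)) n := by
  obtain ⟨m, rfl⟩ := Nat.exists_eq_add_of_le' hn
  have htable := tableDigit_pow_three_mul_lt m (by lia)
  rw [tableDigit_eq (by lia), tableDigit_eq (by lia), tableDigit_eq (by lia),
    tableDigit_eq (by lia)] at htable
  refine fwdDiff_iter_three_log_pos p_pos ?_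
  unfold p
  exact_mod_cast htable

end SmallIndices

theorem third_difference_log_p_pos (n : ℕ) (hn : 116 ≤ n) :
    Real.log (p (n + 2)) - 3 * Real.log (p (n + 1)) + 3 * Real.log (p n) -
      Real.log (p (n - 1)) > 0 := by
  obtain ⟨k, rfl⟩ : ∃ k, n = k + 1 := ⟨n - 1, by lia⟩
  have hpos : 0 < (fwdDiff 1)^[3] (fun k : ℕ ↦ log (p k)) k := by
    rcases lt_or_ge k 1598 with hk | hk
    · exact third_difference_log_p_pos_of_lt (by lia) hk
    · exact third_difference_log_p_pos_of_ge hk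
  rwa [fwdDiff_iter_three] at hpos
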